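/- Let p ∈ (1, ∞). Let Φ be a Φ-function such that Φ ∈ (Inc)_p ∩ (Dec), sup_{t>0} Φ(t)Φ(t^{-1}) < ∞, and φ := Φ' is continuous on (0, ∞). Assume there is a Φ-function Ψ ∈ (aInc)_p ∩ (Dec) and a constant K ≥ 1 such that Φ(ts)/Φ(t) ≤ K·Ψ(s) for all t, s > 0. Then there exist positive constants C and c depending only on Φ, Ψ, p such that for every N-dimensional subspace X_N ⊂ C(Ω) with the constant function 1 ∈ X_N, there are a set x = {x₁, …, x_m} ⊂ Ω of cardinality m ≤ c·Ψ(N^{1/min{p,2}})·(log 2N)³ and positive weights λ₁, …, λ_m with λ₁ + … + λ_m = 1 such that ‖f‖_Φ ≤ C·(M_{Φ,Ψ}(m))^{1/p}·‖f‖_{Ψ,x,λ} for all f ∈ X_N, where M_{Φ,Ψ}(m) := max{1, max{Ψ(t)/Φ(t) : t ∈ [Φ^{-1}(1), Φ^{-1}(m)]}}. -/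

import Mathlib

open MeasureTheory

noncomputable section

/-- The sup-norm (uniform norm) `‖f‖_∞ = sup_{x ∈ Ω} |f x|` of a real-valued function. -/
def supNorm {Ω : Type*} (f : Ω → ℝ) : ℝ := ⨆ x, |f x|

/-- The Luxemburg functional `‖f‖_Φ = inf {λ > 0 : ∫ Φ(|f|/λ) dμ ≤ 1}`. -/
def luxNorm {Ω : Type*} [MeasurableSpace Ω] (μ : Measure Ω) (Φ : ℝ → ℝ) (f : Ω → ℝ) : ℝ :=
  sInf {lam : ℝ | 0 < lam ∧ ∫ x, Φ (|f x| / lam) ∂μ ≤ 1}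

/-- The discrete Luxemburg functional `‖f‖_{Φ,x}` with respect to the uniform discrete
probability measure `(1/m) ∑_{j=1}^m δ_{x_j}`. -/
def discLuxNorm {Ω : Type*} (Φ : ℝ → ℝ) {m : ℕ} (x : Fin m → Ω) (f : Ω → ℝ) : ℝ :=
  sInf {lam : ℝ | 0 < lam ∧ (∑ j, Φ (|f (x j)| / lam)) / (m : ℝ) ≤ 1}

/-- The weighted discrete Luxemburg functional `‖f‖_{Φ,x,λ}` with respect to the discrete
probability measure `∑_{j=1}^m λ_j δ_{x_j}`. -/
def wDiscLuxNorm {Ω : Type*} (Φ : ℝ → ℝ) {m : ℕ} (x : Fin m → Ω) (w : Fin m → ℝ)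
    (f : Ω → ℝ) : ℝ :=
  sInf {lam : ℝ | 0 < lam ∧ (∑ j, w j * Φ (|f (x j)| / lam)) ≤ 1}

/-- `Φ : [0,∞) → [0,∞)` is a Φ-prefunction: increasing, `Φ(0) = 0`, `Φ(0+) = 0`,
`Φ(∞) = ∞` (stated for a function on `ℝ`, with the relevant conditions on `[0,∞)`). -/
structure IsPhiPrefun (Φ : ℝ → ℝ) : Prop where
  mono : MonotoneOn Φ (Set.Ici 0)
  map_zero : Φ 0 = 0
  nonneg : ∀ t : ℝ, 0 ≤ t → 0 ≤ Φ t
  tendsto_zero : Filter.Tendsto Φ (nhdsWithin 0 (Set.Ioi 0)) (nhds 0)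
  tendsto_atTop : Filter.Tendsto Φ Filter.atTop Filter.atTop

/-- `Φ ∈ (aInc)_p` with constant `a`: `t ↦ Φ(t) t^{-p}` is almost increasing on `(0,∞)`. -/
def AIncP (Φ : ℝ → ℝ) (p a : ℝ) : Prop :=
  ∀ s t : ℝ, 0 < s → s < t → Φ s / s ^ p ≤ a * (Φ t / t ^ p)

/-- `Φ ∈ (Inc)_p` : `t ↦ Φ(t) t^{-p}` is increasing on `(0,∞)`. -/
def IncP (Φ : ℝ → ℝ) (p : ℝ) : Prop :=
  ∀ s t : ℝ, 0 < s → s < t → Φ s / s ^ p ≤ Φ t / t ^ p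

/-- `Φ ∈ (Dec)_q` : `t ↦ Φ(t) t^{-q}` is decreasing on `(0,∞)`. -/
def DecQ (Φ : ℝ → ℝ) (q : ℝ) : Prop :=
  ∀ s t : ℝ, 0 < s → s < t → Φ t / t ^ q ≤ Φ s / s ^ q

/-- `Φ ∈ (aDec)_q` with constant `b`: `t ↦ Φ(t) t^{-q}` is almost decreasing on `(0,∞)`. -/
def ADecQ (Φ : ℝ → ℝ) (q b : ℝ) : Prop :=
  ∀ s t : ℝ, 0 < s → s < t → Φ t / t ^ q ≤ b * (Φ s / s ^ q)

/-- `t ↦ Φ(t) t^{-p}` is almost increasing with constant `a` on `(t_*, ∞)`. -/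
def AIncPOn (Φ : ℝ → ℝ) (p a tstar : ℝ) : Prop :=
  ∀ s t : ℝ, tstar < s → s < t → Φ s / s ^ p ≤ a * (Φ t / t ^ p)

/-- `t ↦ Φ(t) t^{-q}` is almost decreasing with constant `b` on `(t_*, ∞)`. -/
def ADecQOn (Φ : ℝ → ℝ) (q b tstar : ℝ) : Prop :=
  ∀ s t : ℝ, tstar < s → s < t → Φ t / t ^ q ≤ b * (Φ s / s ^ q)

/-- Entropy numbers `e_n(F, d)` of a set `F` with respect to a distance-like function `dd`:
the infimum of `ε > 0` such that `F` can be covered by `2^{2^n}` (one, for `n = 0`)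
`ε`-balls centered in `F`. -/
def entropyNumD {X : Type*} (dd : X → X → ℝ) (F : Set X) (n : ℕ) : ℝ :=
  sInf {ε : ℝ | 0 < ε ∧ ∃ T : Finset X, ↑T ⊆ F ∧
    T.card ≤ (if n = 0 then 1 else 2 ^ 2 ^ n) ∧ ∀ f ∈ F, ∃ g ∈ T, dd f g < ε}

/-- Sampling numbers `ϱ_m(F, ‖·‖)`: recovery by linear methods from samples at `m` points. -/
def sampNum {Ω : Type*} (nrm : (Ω → ℝ) → ℝ) (F : Set (Ω → ℝ)) (m : ℕ) : ℝ :=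
  sInf {r : ℝ | ∃ (x : Fin m → Ω) (T : (Fin m → ℝ) →ₗ[ℝ] (Ω → ℝ)),
    r = ⨆ f ∈ F, nrm (fun y => f y - T (fun j => f (x j)) y)}

/-- Modified sampling numbers `ϱ*_m(F, ‖·‖)`: recovery by arbitrary methods mapping into a
subspace of dimension at most `m`, from samples at `m` points. -/
def sampNumStar {Ω : Type*} (nrm : (Ω → ℝ) → ℝ) (F : Set (Ω → ℝ)) (m : ℕ) : ℝ :=
  sInf {r : ℝ | ∃ (x : Fin m → Ω) (Y : Submodule ℝ (Ω → ℝ)), Module.finrank ℝ Y ≤ m ∧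
    ∃ T : (Fin m → ℝ) → Ω → ℝ, (∀ v, T v ∈ Y) ∧
    r = ⨆ f ∈ F, nrm (fun y => f y - T (fun j => f (x j)) y)}

/-- Kolmogorov width `d_N(F, ‖·‖_∞)` : infimum over `N`-dimensional subspaces of `C(Ω)` of the
worst-case best approximation error in the uniform norm. -/
def kolWidth {Ω : Type*} [TopologicalSpace Ω] (F : Set (Ω → ℝ)) (N : ℕ) : ℝ :=
  sInf {r : ℝ | ∃ X : Submodule ℝ (Ω → ℝ), Module.finrank ℝ X = N ∧
    (∀ u ∈ X, Continuous u) ∧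
    r = ⨆ f ∈ F, sInf ((fun u => supNorm (fun y => f y - u y)) '' (X : Set (Ω → ℝ)))}

end
/-- `M_{Φ,Ψ}(m) = max{1, max{Ψ(t)/Φ(t) : t ∈ [Φ⁻¹(1), Φ⁻¹(m)]}}`, the interval
`[Φ⁻¹(1), Φ⁻¹(m)]` being expressed through the condition `Φ(t) ∈ [1, m]`. -/
noncomputable def MOf (Φ Ψ : ℝ → ℝ) (m : ℝ) : ℝ :=
  max 1 (sSup ((fun t => Ψ t / Φ t) '' {t : ℝ | 0 < t ∧ 1 ≤ Φ t ∧ Φ t ≤ m}))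

/-!
The modular `∫ Φ |f|` on an `N`-dimensional space is controlled by importance sampling. A
maximiser of the determinant (a Lewis-type position) supplies a density with respect to which the
unit ball of the modular has small entropy in the supremum norm, by the dual Sudakov inequality, up
to a Gaussian maximal parameter `L`. Sampling from that density, with a union bound over entropy
nets for each dyadic level of `|f|`, preserves the large modulars up to a constant, and
`Φ (t s) ≤ K Φ t Ψ s` converts the supremum bound into the factor `Ψ (N ^ (1 / min p 2))`.

The parameter `L` is at most `N log N` by the dimension alone, and at most the logarithm of the
number of points on a finite set. Hence a first sample of size polynomial in `N`, resampled once
more, leaves `L` of order `log N`. A general measure is first replaced by a convex combination of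
point masses, since a Bochner integral lies in the closed convex hull of the values.
-/

namespace OrliczSampling

open ProbabilityTheory Module
open scoped RealInnerProductSpace

section PolarBody

variable {E : Type*} [NormedAddCommGroup E] [InnerProductSpace ℝ E]

/-- The polar body `{x : |⟪x, e i⟫| ≤ √L for all i}` of a family of vectors. -/
def polarBody {ι : Type*} (e : ι → E) (L : ℝ) : Set E := {x | ∀ i, ⟪x, e i⟫ ^ 2 ≤ L}

/-- The points `z` and `z'` are at distance more than `t` in the seminorm `sup_i |⟪·, e i⟫|`. -/
def Apart {ι : Type*} (e : ι → E) (t : ℝ) (z z' : E) : Prop := ∃ i, t < |⟪z - z', e i⟫|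

lemma isClosed_polarBody {ι : Type*} (e : ι → E) (L : ℝ) : IsClosed (polarBody e L) := by
  rw [polarBody, Set.ofPred_forall]
  exact isClosed_iInter fun i => isClosed_le (by fun_prop) continuous_const

lemma neg_mem_polarBody {ι : Type*} {e : ι → E} {L : ℝ} (x : E) :
    -x ∈ polarBody e L ↔ x ∈ polarBody e L := by
  simp only [polarBody, Set.mem_ofPred_eq, inner_neg_left, neg_sq]

end PolarBody

section Gaussian

variable {E : Type*} [NormedAddCommGroup E] [InnerProductSpace ℝ E] [FiniteDimensional ℝ E]
  [MeasurableSpace E] [BorelSpace E]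

lemma integral_exp_neg_sq_norm_div_two :
    ∫ x : E, Real.exp (-‖x‖ ^ 2 / 2) = (Real.pi / (1 / 2)) ^ (finrank ℝ E / 2 : ℝ) := by
  rw [← GaussianFourier.integral_rexp_neg_mul_sq_norm (b := 1 / 2) (by norm_num)]
  ring_nf

lemma stdGaussian_eq_tilted :
    stdGaussian E = (volume : Measure E).tilted (fun x => -‖x‖ ^ 2 / 2) := by
  have hint : Integrable (fun x : E => Real.exp (-‖x‖ ^ 2 / 2)) :=
    .of_integral_ne_zero (by rw [integral_exp_neg_sq_norm_div_two]; positivity)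
  have := isProbabilityMeasure_tilted hint
  refine Measure.ext_of_charFun (funext fun t => ?_)
  have hfourier := GaussianFourier.integral_cexp_neg_mul_sq_norm_add (V := E) (b := 1 / 2)
    (by norm_num) Complex.I t
  rw [charFun_stdGaussian, charFun_apply, integral_tilted, integral_exp_neg_sq_norm_div_two]
  set Z : ℝ := (Real.pi / (1 / 2)) ^ (finrank ℝ E / 2 : ℝ) with hZ
  have hZ0 : (Z : ℂ) ≠ 0 := by
    have : 0 < Z := by positivity
    exact_mod_cast this.ne'
  have hZpow : (Real.pi / (1 / 2) : ℂ) ^ (finrank ℝ E / 2 : ℂ) = Z := by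
    rw [hZ, Complex.ofReal_cpow (by positivity)]; push_cast; rfl
  have hdensity : ∀ x : E, (Real.exp (-‖x‖ ^ 2 / 2) / Z) • Complex.exp (⟪x, t⟫ * Complex.I)
      = (Z : ℂ)⁻¹ * Complex.exp (-(1 / 2) * ‖x‖ ^ 2 + Complex.I * ⟪t, x⟫) := fun x => by
    rw [Complex.exp_add, Complex.real_smul, real_inner_comm]
    push_cast
    ring_nf
  simp only [hdensity]
  rw [integral_const_mul, hfourier, hZpow, inv_mul_cancel_left₀ hZ0, Complex.I_sq]
  ring_nf

lemma integral_comp_add_right_stdGaussian (f : E → ℝ) (y : E) :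
    ∫ x, f (x + y) ∂stdGaussian E
      = ∫ x, Real.exp (⟪x, y⟫ - ‖y‖ ^ 2 / 2) * f x ∂stdGaussian E := by
  rw [stdGaussian_eq_tilted, integral_tilted, integral_tilted,
    ← integral_sub_right_eq_self _ y]
  refine integral_congr_ae (.of_forall fun x => ?_)
  simp only [sub_add_cancel, smul_eq_mul]
  rw [div_mul_eq_mul_div, div_mul_eq_mul_div, ← mul_assoc, ← Real.exp_add, norm_sub_sq_real]
  ring_nf

lemma integral_exp_inner_stdGaussian (y : E) :
    ∫ x, Real.exp ⟪x, y⟫ ∂stdGaussian E = Real.exp (‖y‖ ^ 2 / 2) := by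
  have h := integral_comp_add_right_stdGaussian (fun _ => (1 : ℝ)) y
  simp only [Real.exp_sub, mul_one, integral_const, probReal_univ, smul_eq_mul,
    integral_div] at h
  exact (eq_of_div_eq_one h.symm)

lemma integrable_exp_inner_stdGaussian (y : E) :
    Integrable (fun x => Real.exp ⟪x, y⟫) (stdGaussian E) :=
  .of_integral_ne_zero (by rw [integral_exp_inner_stdGaussian]; positivity)

lemma measurePreserving_neg_stdGaussian :
    MeasurePreserving (fun x : E => -x) (stdGaussian E) (stdGaussian E) :=
  ⟨measurable_neg, stdGaussian_map (LinearIsometryEquiv.neg ℝ)⟩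

/-- After symmetrisation, the Cameron–Martin density `exp ⟪x, y⟫` becomes `cosh ⟪x, y⟫ ≥ 1`. -/
lemma exp_mul_measureReal_stdGaussian_le_preimage_add {s : Set E} (hs : MeasurableSet s)
    (hneg : ∀ x, -x ∈ s ↔ x ∈ s) (y : E) :
    Real.exp (-(‖y‖ ^ 2 / 2)) * (stdGaussian E).real s
      ≤ (stdGaussian E).real ((· + y) ⁻¹' s) := by
  have hshift : ∀ z : E, (stdGaussian E).real ((· + z) ⁻¹' s)
      = Real.exp (-(‖z‖ ^ 2 / 2)) * ∫ x in s, Real.exp ⟪x, z⟫ ∂stdGaussian E := fun z => by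
    rw [← integral_indicator_one (hs.preimage (measurable_add_const z)), ← integral_indicator hs,
      ← integral_const_mul]
    refine (integral_comp_add_right_stdGaussian (s.indicator 1) z).trans ?_
    refine integral_congr_ae (.of_forall fun x => ?_)
    by_cases hx : x ∈ s <;> simp [hx, sub_eq_neg_add, Real.exp_add]
  have hsymm : ∫ x in s, Real.exp ⟪x, y⟫ ∂stdGaussian E
      = ∫ x in s, Real.exp (-⟪x, y⟫) ∂stdGaussian E := by
    have hpre : (fun x : E => -x) ⁻¹' s = s := Set.ext hneg
    have h := measurePreserving_neg_stdGaussian.setIntegral_preimage_emb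
      (MeasurableEquiv.neg E).measurableEmbedding (fun x => Real.exp ⟪x, y⟫) s
    rw [hpre] at h
    simpa only [inner_neg_left] using h.symm
  have hint : ∀ z : E, IntegrableOn (fun x => Real.exp ⟪x, z⟫) s (stdGaussian E) := fun z =>
    (integrable_exp_inner_stdGaussian z).integrableOn
  have hint' : IntegrableOn (fun x => Real.exp (-⟪x, y⟫)) s (stdGaussian E) := by
    simpa only [inner_neg_right] using hint (-y)
  have hcosh : (stdGaussian E).real s ≤ ∫ x in s, Real.cosh ⟪x, y⟫ ∂stdGaussian E := by
    rw [← mul_one ((stdGaussian E).real s), ← smul_eq_mul, ← setIntegral_const]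
    refine integral_mono (integrable_const _) ?_ fun x => Real.one_le_cosh _
    simp only [Real.cosh_eq]
    exact ((hint y).add hint').div_const 2
  rw [hshift]
  gcongr
  refine hcosh.trans_eq ?_
  simp only [Real.cosh_eq, integral_div, integral_add (hint y) hint', ← hsymm]
  ring

/-- `√L` bounds a median of `sup_i |⟪G, e i⟫|` for a standard Gaussian vector `G`. -/
def IsGaussianMedianBound {ι : Type*} (e : ι → E) (L : ℝ) : Prop :=
  1 / 2 ≤ (stdGaussian E).real (polarBody e L)

lemma IsGaussianMedianBound.mono {ι κ : Type*} {d : κ → E} {e : ι → E} {L L' : ℝ}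
    (hd : IsGaussianMedianBound d L) (h : polarBody d L ⊆ polarBody e L') :
    IsGaussianMedianBound e L' :=
  hd.trans (measureReal_mono h)

/-- The translates of a polar body by a dilated separated set are disjoint, and each of them has
Gaussian measure bounded below by the shift inequality. -/
lemma card_le_of_pairwise_apart_of_ball {ι : Type*} {e : ι → E} {L : ℝ} (hL : 0 < L)
    (he : IsGaussianMedianBound e L) {S : Finset E} {c : E} {R t : ℝ} (ht : 0 < t)
    (hball : ∀ z ∈ S, ‖z - c‖ ^ 2 ≤ R)
    (hsep : (S : Set E).Pairwise (Apart e t)) :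
    (S.card : ℝ) ≤ 2 * Real.exp (2 * L * R / t ^ 2) := by
  set l := 2 * √L / t with hl
  have hl0 : 0 < l := by positivity
  have hmeas := (isClosed_polarBody e L).measurableSet
  let piece : E → Set E := fun z => (· + l • (z - c)) ⁻¹' polarBody e L
  have hdisj : (S : Set E).PairwiseDisjoint piece := fun z hz z' hz' hne => by
    refine Set.disjoint_left.2 fun x hx hx' => ?_
    obtain ⟨i, hi⟩ := hsep hz hz' hne
    have hdiff : ⟪x + l • (z - c), e i⟫ - ⟪x + l • (z' - c), e i⟫ = l * ⟪z - z', e i⟫ := by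
      rw [← inner_sub_left, ← real_inner_smul_left]; congr 1; module
    have hsmall : l * |⟪z - z', e i⟫| ≤ 2 * √L := by
      rw [← abs_of_pos hl0, ← abs_mul, ← hdiff, two_mul]
      exact (abs_sub _ _).trans (add_le_add (Real.abs_le_sqrt (hx i)) (Real.abs_le_sqrt (hx' i)))
    have hlt : l * t = 2 * √L := by rw [hl]; field_simp
    exact absurd (mul_lt_mul_of_pos_left hi hl0) (by linarith)
  have hpiece : ∀ z ∈ S, Real.exp (-(2 * L * R / t ^ 2)) * (1 / 2)
      ≤ (stdGaussian E).real (piece z) := fun z hz => by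
    refine le_trans ?_ (exp_mul_measureReal_stdGaussian_le_preimage_add hmeas neg_mem_polarBody _)
    refine mul_le_mul (Real.exp_le_exp.2 (neg_le_neg ?_)) he (by norm_num) (Real.exp_pos _).le
    calc ‖l • (z - c)‖ ^ 2 / 2 = 2 * L * ‖z - c‖ ^ 2 / t ^ 2 := by
          rw [norm_smul, mul_pow, Real.norm_eq_abs, sq_abs, hl, div_pow, mul_pow,
            Real.sq_sqrt hL.le]
          ring
      _ ≤ 2 * L * R / t ^ 2 := by gcongr; exact hball z hz
  have htotal : ∑ z ∈ S, (stdGaussian E).real (piece z) ≤ 1 := by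
    rw [← measureReal_biUnion_finset hdisj fun z _ => hmeas.preimage (measurable_add_const _)]
    exact measureReal_le_one
  have hsum := (Finset.sum_le_sum hpiece).trans htotal
  rw [Finset.sum_const, nsmul_eq_mul, Real.exp_neg, ← mul_assoc, ← div_eq_mul_inv, mul_one_div,
    div_div, div_le_one (by positivity)] at hsum
  linarith

lemma measureReal_stdGaussian_lt_sq_inner_le {e : E} (he : ‖e‖ ≤ 1) {L : ℝ} (hL : 0 ≤ L) :
    (stdGaussian E).real {x | L < ⟪x, e⟫ ^ 2} ≤ 2 * Real.exp (-L / 2) := by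
  have hsub : ∀ v : E, ‖v‖ ≤ 1 → HasSubgaussianMGF (fun x => ⟪x, v⟫) 1 (stdGaussian E) :=
    fun v hv => by
      have hsmul : ∀ (t : ℝ) (x : E), t * ⟪x, v⟫ = ⟪x, t • v⟫ := fun t x =>
        (real_inner_smul_right _ _ _).symm
      refine ⟨fun t => ?_, fun t => ?_⟩
      · simpa only [hsmul] using integrable_exp_inner_stdGaussian (t • v)
      · simp only [mgf, hsmul, integral_exp_inner_stdGaussian, norm_smul, mul_pow,
          Real.norm_eq_abs, sq_abs, NNReal.coe_one, one_mul]
        gcongr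
        exact mul_le_of_le_one_right (sq_nonneg t) (pow_le_one₀ (norm_nonneg v) hv)
  have htail : ∀ v : E, ‖v‖ ≤ 1 →
      (stdGaussian E).real {x | √L ≤ ⟪x, v⟫} ≤ Real.exp (-L / 2) := fun v hv => by
    simpa [Real.sq_sqrt hL] using (hsub v hv).measure_ge_le (Real.sqrt_nonneg L)
  have hcover : {x : E | L < ⟪x, e⟫ ^ 2} ⊆ {x | √L ≤ ⟪x, e⟫} ∪ {x | √L ≤ ⟪x, -e⟫} :=
    fun x hx => by
      have habs : √L ≤ |⟪x, e⟫| := Real.sqrt_sq_eq_abs ⟪x, e⟫ ▸ Real.sqrt_le_sqrt hx.le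
      rcases le_abs.1 habs with h | h
      · exact Or.inl h
      · exact Or.inr (by simpa only [Set.mem_ofPred_eq, inner_neg_right] using h)
  calc _ ≤ _ := measureReal_mono hcover
    _ ≤ _ := measureReal_union_le _ _
    _ ≤ Real.exp (-L / 2) + Real.exp (-L / 2) :=
        add_le_add (htail e he) (htail (-e) (by rwa [norm_neg]))
    _ = _ := by ring

lemma isGaussianMedianBound_of_log_card_le {ι : Type*} [Fintype ι] [Nonempty ι] {e : ι → E}
    (he : ∀ i, ‖e i‖ ≤ 1) {L : ℝ} (hL : 2 * Real.log (4 * Fintype.card ι) ≤ L) :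
    IsGaussianMedianBound e L := by
  have hcard : (1 : ℝ) ≤ Fintype.card ι := by exact_mod_cast Fintype.card_pos
  have hlog := Real.log_nonneg (by linarith : 1 ≤ 4 * (Fintype.card ι : ℝ))
  have hL0 : 0 ≤ L := by linarith
  have hexp : Real.exp (-L / 2) ≤ (4 * (Fintype.card ι : ℝ))⁻¹ := by
    rw [neg_div, Real.exp_neg]
    gcongr
    exact (Real.log_le_iff_le_exp (by positivity)).1 (by linarith)
  have hcompl : (polarBody e L)ᶜ = ⋃ i, {x | L < ⟪x, e i⟫ ^ 2} := by
    ext x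
    simp [polarBody]
  have hbad : (stdGaussian E).real (polarBody e L)ᶜ ≤ 1 / 2 := by
    rw [hcompl]
    calc _ ≤ ∑ i, (stdGaussian E).real {x | L < ⟪x, e i⟫ ^ 2} := measureReal_iUnion_fintype_le _
      _ ≤ ∑ _i : ι, 2 * (4 * (Fintype.card ι : ℝ))⁻¹ := Finset.sum_le_sum fun i _ =>
          (measureReal_stdGaussian_lt_sq_inner_le (he i) hL0).trans (by gcongr)
      _ = 1 / 2 := by
          rw [Finset.sum_const, Finset.card_univ, nsmul_eq_mul]; field_simp; norm_num
  rw [probReal_compl_eq_one_sub (isClosed_polarBody e L).measurableSet] at hbad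
  unfold IsGaussianMedianBound
  linarith

/-- `√(N · 2 log (4 N))` bounds a median of `‖G‖`, by the coordinates in an orthonormal basis. -/
lemma isGaussianMedianBound_of_finrank_mul_log_le [Nontrivial E] {ι : Type*} {e : ι → E}
    (he : ∀ i, ‖e i‖ ≤ 1) {L : ℝ}
    (hL : finrank ℝ E * (2 * Real.log (4 * finrank ℝ E)) ≤ L) : IsGaussianMedianBound e L := by
  have hdim : 0 < finrank ℝ E := finrank_pos
  have : Nonempty (Fin (finrank ℝ E)) := ⟨⟨0, hdim⟩⟩
  let b := stdOrthonormalBasis ℝ E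
  have hb : IsGaussianMedianBound b (2 * Real.log (4 * finrank ℝ E)) :=
    isGaussianMedianBound_of_log_card_le (fun k => (b.norm_eq_one k).le) (by simp)
  refine hb.mono fun x hx i => ?_
  calc ⟪x, e i⟫ ^ 2 ≤ ‖x‖ ^ 2 := by
        rw [← sq_abs]
        gcongr
        exact (abs_real_inner_le_norm _ _).trans (mul_le_of_le_one_right (norm_nonneg _) (he i))
    _ = ∑ k, ⟪x, b k⟫ ^ 2 := by
        simp only [← b.sum_sq_norm_inner_left x, Real.norm_eq_abs, sq_abs]
    _ ≤ ∑ _k : Fin (finrank ℝ E), 2 * Real.log (4 * finrank ℝ E) :=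
        Finset.sum_le_sum fun k _ => hx k
    _ ≤ L := by simpa using hL

end Gaussian

section Entropy

lemma exists_finset_pairwise_forall_exists_not {α : Type*} {far : α → α → Prop}
    [Std.Symm far] {A : Set α} {B : ℕ}
    (hB : ∀ S : Finset α, ↑S ⊆ A → (S : Set α).Pairwise far → S.card ≤ B) :
    ∃ S : Finset α, ↑S ⊆ A ∧ (S : Set α).Pairwise far ∧
      ∀ z ∈ A, ∃ c ∈ S, z = c ∨ ¬far z c := by
  classical
  let IsCard : ℕ → Prop := fun n =>
    ∃ S : Finset α, ↑S ⊆ A ∧ (S : Set α).Pairwise far ∧ S.card = n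
  obtain ⟨S, hSA, hSfar, hScard⟩ := Nat.findGreatest_spec (P := IsCard) (Nat.zero_le B)
    ⟨∅, by simp, by simp, rfl⟩
  refine ⟨S, hSA, hSfar, fun z hz => ?_⟩
  by_contra! hcon
  have hzS : z ∉ S := fun h => (hcon z h).1 rfl
  have hins : (insert z S : Finset α).card = S.card + 1 := Finset.card_insert_of_notMem hzS
  have hinsA : ((insert z S : Finset α) : Set α) ⊆ A := by
    rw [Finset.coe_insert]
    exact Set.insert_subset hz hSA
  have hinsfar : ((insert z S : Finset α) : Set α).Pairwise far := by
    rw [Finset.coe_insert]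
    exact hSfar.insert fun b hb _ => ⟨(hcon b hb).2, Std.Symm.symm _ _ (hcon b hb).2⟩
  have hmax := Nat.le_findGreatest (P := IsCard) (hB _ hinsA hinsfar) ⟨_, hinsA, hinsfar, rfl⟩
  omega

lemma abs_sub_rpow_le {a b r : ℝ} (hr0 : 0 ≤ r) (hr2 : r ≤ 2) :
    |a - b| ^ r ≤ 4 * (|a| ^ r + |b| ^ r) := by
  have hmax : 0 ≤ max |a| |b| := le_max_of_le_left (abs_nonneg _)
  have hsub : |a - b| ≤ 2 * max |a| |b| := by
    linarith [abs_sub a b, le_max_left |a| |b|, le_max_right |a| |b|]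
  have htwo : (2 : ℝ) ^ r ≤ 4 :=
    (Real.rpow_le_rpow_of_exponent_le one_le_two hr2).trans_eq (by norm_num)
  calc |a - b| ^ r ≤ (2 * max |a| |b|) ^ r := Real.rpow_le_rpow (abs_nonneg _) hsub hr0
    _ = 2 ^ r * (max |a| |b|) ^ r := Real.mul_rpow zero_le_two hmax
    _ ≤ 4 * (|a| ^ r + |b| ^ r) := by
        gcongr
        have ha := Real.rpow_nonneg (abs_nonneg a) r
        have hb := Real.rpow_nonneg (abs_nonneg b) r
        rcases max_choice |a| |b| with h | h <;> rw [h] <;> linarith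

lemma sq_le_rpow_mul_rpow {a u r : ℝ} (ha : 0 ≤ a) (hau : a ≤ u) (hr : r ≤ 2) :
    a ^ 2 ≤ u ^ (2 - r) * a ^ r := by
  rcases ha.eq_or_lt with rfl | hpos
  · rw [zero_pow two_ne_zero]
    exact mul_nonneg (Real.rpow_nonneg hau _) (Real.rpow_nonneg le_rfl _)
  · calc a ^ 2 = a ^ (2 - r) * a ^ r := by
          rw [← Real.rpow_add hpos, sub_add_cancel, Real.rpow_two]
      _ ≤ u ^ (2 - r) * a ^ r := by
          gcongr

variable {E : Type*} [NormedAddCommGroup E] [InnerProductSpace ℝ E] {ι : Type*}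

instance {e : ι → E} {t : ℝ} : Std.Symm (Apart e t) :=
  ⟨fun _ _ ⟨i, hi⟩ => ⟨i, by rwa [← neg_sub, inner_neg_left, abs_neg]⟩⟩

lemma not_apart_iff {e : ι → E} {t : ℝ} {z z' : E} :
    ¬Apart e t z z' ↔ ∀ i, |⟪z - z', e i⟫| ≤ t := by
  simp only [Apart, not_exists, not_lt]

lemma not_apart_self {e : ι → E} {t : ℝ} (ht : 0 ≤ t) (z : E) : ¬Apart e t z z := by
  simpa [not_apart_iff] using fun _ => ht

variable [Fintype ι]

/-- `∑ i, ν i |⟪z, e i⟫| ^ r`, the `r`-th power of the `L_r(ν)` norm of `⟪z, e ·⟫`. -/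
noncomputable def powerSum (e : ι → E) (ν : ι → ℝ) (r : ℝ) (z : E) : ℝ := ∑ i, ν i * |⟪z, e i⟫| ^ r

/-- Vectors `e i` of the unit ball and weights `ν i ≥ 0` forming a frame with lower bound `1 / D`:
the norm of `z` is controlled by the `L_2(ν)` norm of `⟪z, e ·⟫`. -/
structure IsUnitFrame (e : ι → E) (ν : ι → ℝ) (D : ℝ) : Prop where
  norm_le_one : ∀ i, ‖e i‖ ≤ 1
  weight_nonneg : ∀ i, 0 ≤ ν i
  one_le : 1 ≤ D
  norm_sq_le : ∀ z, ‖z‖ ^ 2 ≤ D * ∑ i, ν i * ⟪z, e i⟫ ^ 2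

namespace IsUnitFrame

variable {e : ι → E} {ν : ι → ℝ} {D r : ℝ}

lemma abs_inner_le_norm (h : IsUnitFrame e ν D) (w : E) (i : ι) : |⟪w, e i⟫| ≤ ‖w‖ :=
  (abs_real_inner_le_norm _ _).trans
    (mul_le_of_le_one_right (norm_nonneg _) (h.norm_le_one i))

lemma norm_sq_le_rpow_mul_powerSum (h : IsUnitFrame e ν D) (hr : r ≤ 2) {w : E} {u : ℝ}
    (hw : ∀ i, |⟪w, e i⟫| ≤ u) : ‖w‖ ^ 2 ≤ D * (u ^ (2 - r) * powerSum e ν r w) := by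
  refine (h.norm_sq_le w).trans (mul_le_mul_of_nonneg_left ?_ (zero_le_one.trans h.one_le))
  rw [powerSum, Finset.mul_sum]
  refine Finset.sum_le_sum fun i _ => ?_
  rw [mul_left_comm, ← sq_abs]
  exact mul_le_mul_of_nonneg_left (sq_le_rpow_mul_rpow (abs_nonneg _) (hw i) hr)
    (h.weight_nonneg i)

lemma norm_rpow_le_mul_powerSum (h : IsUnitFrame e ν D) (hr : r ≤ 2) {w : E} (hw : w ≠ 0) :
    ‖w‖ ^ r ≤ D * powerSum e ν r w := by
  have hpos : 0 < ‖w‖ := norm_pos_iff.2 hw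
  have hsq := h.norm_sq_le_rpow_mul_powerSum hr (h.abs_inner_le_norm w)
  have hsplit : ‖w‖ ^ 2 = ‖w‖ ^ (2 - r) * ‖w‖ ^ r := by
    rw [← Real.rpow_add hpos, sub_add_cancel, Real.rpow_two]
  rw [hsplit, mul_left_comm] at hsq
  exact le_of_mul_le_mul_left hsq (Real.rpow_pos_of_pos hpos _)

lemma powerSum_sub_le (h : IsUnitFrame e ν D) (hr0 : 0 ≤ r) (hr : r ≤ 2) (z z' : E) :
    powerSum e ν r (z - z') ≤ 4 * (powerSum e ν r z + powerSum e ν r z') := by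
  rw [powerSum, powerSum, powerSum, ← Finset.sum_add_distrib, Finset.mul_sum]
  refine Finset.sum_le_sum fun i _ => ?_
  rw [inner_sub_left, ← mul_add, mul_left_comm]
  exact mul_le_mul_of_nonneg_left (abs_sub_rpow_le hr0 hr) (h.weight_nonneg i)

lemma powerSum_sub_le_sixteen (h : IsUnitFrame e ν D) (hr0 : 0 ≤ r) (hr : r ≤ 2) {z z' : E}
    (hz : powerSum e ν r z ≤ 2) (hz' : powerSum e ν r z' ≤ 2) :
    powerSum e ν r (z - z') ≤ 16 :=
  (h.powerSum_sub_le hr0 hr z z').trans (by linarith)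

lemma card_le_one_of_pairwise_apart (h : IsUnitFrame e ν D) (hr0 : 0 < r) (hr : r ≤ 2) {t : ℝ}
    (ht : 0 ≤ t) (htr : 16 * D ≤ t ^ r) {S : Finset E} (hS : ∀ z ∈ S, powerSum e ν r z ≤ 2)
    (hsep : (S : Set E).Pairwise (Apart e t)) : S.card ≤ 1 := by
  refine Finset.card_le_one.2 fun a ha b hb => by_contra fun hab => ?_
  obtain ⟨i, hi⟩ := hsep ha hb hab
  have hlt : t ^ r < ‖a - b‖ ^ r :=
    Real.rpow_lt_rpow ht (hi.trans_le (h.abs_inner_le_norm _ i)) hr0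
  have hle : ‖a - b‖ ^ r ≤ D * 16 :=
    (h.norm_rpow_le_mul_powerSum hr (sub_ne_zero.2 hab)).trans
      (mul_le_mul_of_nonneg_left (h.powerSum_sub_le_sixteen hr0.le hr (hS a ha) (hS b hb))
        (zero_le_one.trans h.one_le))
  linarith

variable [FiniteDimensional ℝ E] [MeasurableSpace E] [BorelSpace E]

lemma card_le_of_pairwise_apart_of_near (h : IsUnitFrame e ν D) (hr1 : 1 ≤ r) (hr : r ≤ 2)
    {L : ℝ} (hL : 1 ≤ L) (he : IsGaussianMedianBound e L) {t : ℝ} (ht : 0 < t) {S : Finset E}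
    (hS : ∀ z ∈ S, powerSum e ν r z ≤ 2) (hsep : (S : Set E).Pairwise (Apart e t)) {c : E}
    (hc : powerSum e ν r c ≤ 2) (hnear : ∀ z ∈ S, ¬Apart e (2 * t) z c) :
    (S.card : ℝ) ≤ 2 * Real.exp (64 * (D * L * t ^ (-r))) := by
  have hD := h.one_le
  have hball : ∀ z ∈ S, ‖z - c‖ ^ 2 ≤ D * ((2 * t) ^ (2 - r) * 16) := fun z hz =>
    (h.norm_sq_le_rpow_mul_powerSum hr (not_apart_iff.1 (hnear z hz))).trans (by
      gcongr
      exact h.powerSum_sub_le_sixteen (by linarith) hr (hS z hz) hc)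
  refine (card_le_of_pairwise_apart_of_ball (by linarith) he ht hball hsep).trans ?_
  gcongr
  have hdouble : (2 * t) ^ (2 - r) ≤ 2 * (t ^ 2 * t ^ (-r)) := by
    rw [Real.mul_rpow zero_le_two ht.le, sub_eq_add_neg 2 r, Real.rpow_add ht, Real.rpow_two]
    gcongr
    exact (Real.rpow_le_rpow_of_exponent_le one_le_two (by linarith)).trans_eq (Real.rpow_one 2)
  calc 2 * L * (D * ((2 * t) ^ (2 - r) * 16)) / t ^ 2
      ≤ 2 * L * (D * (2 * (t ^ 2 * t ^ (-r)) * 16)) / t ^ 2 := by gcongr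
    _ = 64 * (D * L * t ^ (-r)) := by field_simp; ring

lemma exists_subset_card_le_mul (h : IsUnitFrame e ν D) (hr1 : 1 ≤ r) (hr : r ≤ 2) {L : ℝ}
    (hL : 1 ≤ L) (he : IsGaussianMedianBound e L) {t : ℝ} (ht : 0 < t) {S : Finset E}
    (hS : ∀ z ∈ S, powerSum e ν r z ≤ 2) (hsep : (S : Set E).Pairwise (Apart e t)) :
    ∃ C ⊆ S, (C : Set E).Pairwise (Apart e (2 * t)) ∧
      (S.card : ℝ) ≤ C.card * (2 * Real.exp (64 * (D * L * t ^ (-r)))) := by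
  classical
  obtain ⟨C, hCS, hCsep, hCnet⟩ := exists_finset_pairwise_forall_exists_not
    (far := Apart e (2 * t)) (A := S) (B := S.card)
    fun T hT _ => Finset.card_le_card (by exact_mod_cast hT)
  refine ⟨C, by exact_mod_cast hCS, hCsep, ?_⟩
  let cell : E → Finset E := fun c => S.filter fun z => ¬Apart e (2 * t) z c
  have hcover : S ⊆ C.biUnion cell := fun z hz => by
    obtain ⟨c, hc, hzc⟩ := hCnet z hz
    refine Finset.mem_biUnion.2 ⟨c, hc, Finset.mem_filter.2 ⟨hz, ?_⟩⟩
    exact hzc.elim (fun heq => heq ▸ not_apart_self (by positivity) z) id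
  have hcell : ∀ c ∈ C, ((cell c).card : ℝ) ≤ 2 * Real.exp (64 * (D * L * t ^ (-r))) :=
    fun c hc => h.card_le_of_pairwise_apart_of_near hr1 hr hL he ht
      (fun z hz => hS z (Finset.mem_filter.1 hz).1)
      (hsep.mono (by exact_mod_cast Finset.filter_subset _ S)) (hS c (hCS hc))
      fun z hz => (Finset.mem_filter.1 hz).2
  calc (S.card : ℝ) ≤ ∑ c ∈ C, ((cell c).card : ℝ) := by
        exact_mod_cast (Finset.card_le_card hcover).trans Finset.card_biUnion_le
    _ ≤ C.card • (2 * Real.exp (64 * (D * L * t ^ (-r)))) := Finset.sum_le_card_nsmul _ _ _ hcell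
    _ = _ := nsmul_eq_mul _ _

/-- Doubling the scale halves the exponent `D L t⁻ʳ` at least, so the local bounds on the scales
`2 ^ k * t` add up to a multiple of the one at scale `t`. -/
lemma card_le_of_pairwise_apart (h : IsUnitFrame e ν D) (hr1 : 1 ≤ r) (hr : r ≤ 2) {L : ℝ}
    (hL : 1 ≤ L) (he : IsGaussianMedianBound e L) (n : ℕ) {t : ℝ} (ht : 0 < t)
    (htn : 16 * D ≤ (2 ^ n * t) ^ r) {S : Finset E} (hS : ∀ z ∈ S, powerSum e ν r z ≤ 2)
    (hsep : (S : Set E).Pairwise (Apart e t)) :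
    (S.card : ℝ) ≤ Real.exp (160 * (D * L * t ^ (-r))) := by
  have hD := h.one_le
  have htrivial : ∀ {t : ℝ} {S : Finset E}, 0 < t → 16 * D ≤ t ^ r →
      (∀ z ∈ S, powerSum e ν r z ≤ 2) → (S : Set E).Pairwise (Apart e t) →
      (S.card : ℝ) ≤ Real.exp (160 * (D * L * t ^ (-r))) := fun ht hbig hS hsep =>
    (Nat.cast_le_one.2 (h.card_le_one_of_pairwise_apart (by linarith) hr ht.le hbig hS hsep)).trans
      (Real.one_le_exp (by positivity))
  induction n generalizing t S with
  | zero => exact htrivial ht (by simpa using htn) hS hsep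
  | succ n ih =>
    rcases le_or_gt (16 * D) (t ^ r) with hbig | hsmall
    · exact htrivial ht hbig hS hsep
    obtain ⟨C, hCS, hCsep, hScard⟩ := h.exists_subset_card_le_mul hr1 hr hL he ht hS hsep
    have hCcard : (C.card : ℝ) ≤ Real.exp (160 * (D * L * (2 * t) ^ (-r))) :=
      ih (by positivity) (by rwa [← mul_assoc, ← pow_succ]) (fun z hz => hS z (hCS hz)) hCsep
    set Y := D * L * t ^ (-r) with hY
    have hYbig : 1 ≤ 16 * Y := by
      have hinv : t ^ r * t ^ (-r) = 1 := by
        rw [← Real.rpow_add ht, add_neg_cancel, Real.rpow_zero]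
      have : 1 ≤ 16 * D * t ^ (-r) := hinv ▸ by gcongr
      nlinarith
    have hYhalf : D * L * (2 * t) ^ (-r) ≤ Y / 2 := by
      have htwo : (2 : ℝ) ^ (-r) ≤ 1 / 2 :=
        (Real.rpow_le_rpow_of_exponent_le one_le_two (neg_le_neg hr1)).trans_eq
          (by norm_num [Real.rpow_neg])
      rw [Real.mul_rpow zero_le_two ht.le, mul_left_comm, hY, div_eq_inv_mul, ← one_div]
      gcongr
    calc (S.card : ℝ) ≤ Real.exp (80 * Y) * (Real.exp (16 * Y) * Real.exp (64 * Y)) := by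
          refine hScard.trans ?_
          gcongr
          · exact hCcard.trans (Real.exp_le_exp.2 (by linarith))
          · linarith [Real.add_one_le_exp (16 * Y)]
      _ = Real.exp (160 * Y) := by rw [← Real.exp_add, ← Real.exp_add]; ring_nf

lemma exists_net (h : IsUnitFrame e ν D) (hr1 : 1 ≤ r) (hr : r ≤ 2) {L : ℝ} (hL : 1 ≤ L)
    (he : IsGaussianMedianBound e L) {t : ℝ} (ht : 0 < t) :
    ∃ C : Finset E, (C.card : ℝ) ≤ Real.exp (160 * (D * L * t ^ (-r))) ∧
      ∀ z, powerSum e ν r z ≤ 2 → ∃ c ∈ C, ¬Apart e t z c := by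
  have hD := h.one_le
  obtain ⟨n, hn⟩ := pow_unbounded_of_one_lt (16 * D / t) one_lt_two
  rw [div_lt_iff₀ ht] at hn
  have hscale : 16 * D ≤ (2 ^ n * t) ^ r :=
    hn.le.trans (Real.self_le_rpow_of_one_le (by linarith) hr1)
  obtain ⟨C, hC, hCsep, hCnet⟩ := exists_finset_pairwise_forall_exists_not
    (far := Apart e t) (A := {z | powerSum e ν r z ≤ 2})
    (B := ⌊Real.exp (160 * (D * L * t ^ (-r)))⌋₊) fun S hS hsep =>
      Nat.le_floor (h.card_le_of_pairwise_apart hr1 hr hL he n ht hscale hS hsep)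
  refine ⟨C, h.card_le_of_pairwise_apart hr1 hr hL he n ht hscale hC hCsep, fun z hz => ?_⟩
  obtain ⟨c, hc, hzc⟩ := hCnet z hz
  exact ⟨c, hc, hzc.elim (fun heq => heq ▸ not_apart_self ht.le z) id⟩

end IsUnitFrame

end Entropy

section Growth

/-- `Φ` vanishes only at `0` and grows at rates between those of `t ^ p` and `t ^ q`. The exponents
are normalised by `1 ≤ p` and `2 ≤ q`. -/
structure HasPowerGrowth (Φ : ℝ → ℝ) (p q : ℝ) : Prop where
  one_le : 1 ≤ p
  two_le : 2 ≤ q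
  mono : MonotoneOn Φ (Set.Ici 0)
  map_zero : Φ 0 = 0
  pos : ∀ {t}, 0 < t → 0 < Φ t
  rpow_mul_le : ∀ {s t}, 1 ≤ s → 0 ≤ t → s ^ p * Φ t ≤ Φ (s * t)
  le_rpow_mul : ∀ {s t}, 1 ≤ s → 0 ≤ t → Φ (s * t) ≤ s ^ q * Φ t

namespace HasPowerGrowth

variable {Φ : ℝ → ℝ} {p q s t : ℝ}

lemma nonneg (h : HasPowerGrowth Φ p q) (ht : 0 ≤ t) : 0 ≤ Φ t :=
  ht.eq_or_lt.elim (fun h0 => h0 ▸ h.map_zero.ge) fun h0 => (h.pos h0).le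

lemma le_of_le (h : HasPowerGrowth Φ p q) (hs : 0 ≤ s) (hst : s ≤ t) : Φ s ≤ Φ t :=
  h.mono hs (hs.trans hst) hst

lemma mul_le (h : HasPowerGrowth Φ p q) (hs : 1 ≤ s) (ht : 0 ≤ t) : s * Φ t ≤ Φ (s * t) :=
  (mul_le_mul_of_nonneg_right (Real.self_le_rpow_of_one_le hs h.one_le) (h.nonneg ht)).trans
    (h.rpow_mul_le hs ht)

lemma map_mul_le (h : HasPowerGrowth Φ p q) (hs0 : 0 ≤ s) (hs1 : s ≤ 1) (ht : 0 ≤ t) :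
    Φ (s * t) ≤ s * Φ t := by
  rcases hs0.eq_or_lt with rfl | hs
  · simp [h.map_zero]
  · have hle := h.mul_le ((one_le_inv₀ hs).2 hs1) (mul_nonneg hs0 ht)
    rwa [inv_mul_cancel_left₀ hs.ne', inv_mul_le_iff₀ hs] at hle

lemma rpow_mul_le_of_le_one (h : HasPowerGrowth Φ p q) (hs0 : 0 < s) (hs1 : s ≤ 1) (ht : 0 ≤ t) :
    s ^ q * Φ t ≤ Φ (s * t) := by
  have hle := h.le_rpow_mul ((one_le_inv₀ hs0).2 hs1) (mul_nonneg hs0.le ht)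
  rwa [inv_mul_cancel_left₀ hs0.ne', Real.inv_rpow hs0.le, ← div_eq_inv_mul,
    le_div_iff₀' (Real.rpow_pos_of_pos hs0 q)] at hle

lemma one_le_two_rpow (h : HasPowerGrowth Φ p q) : (1 : ℝ) ≤ 2 ^ q :=
  Real.one_le_rpow one_le_two (zero_le_two.trans h.two_le)

lemma continuousOn (h : HasPowerGrowth Φ p q) : ContinuousOn Φ (Set.Ici 0) := by
  intro t (ht : 0 ≤ t)
  rcases ht.eq_or_lt with rfl | hpos
  · have hlim : Filter.Tendsto (fun x => x * Φ 1) (nhdsWithin 0 (Set.Ici 0)) (nhds (Φ 0)) := by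
      have hcont : Continuous fun x : ℝ => x * Φ 1 := by fun_prop
      simpa [h.map_zero] using (hcont.continuousWithinAt (s := Set.Ici 0) (x := 0)).tendsto
    have hone : ∀ᶠ x : ℝ in nhdsWithin 0 (Set.Ici 0), x ≤ 1 :=
      nhdsWithin_le_nhds (eventually_le_nhds one_pos)
    refine tendsto_of_tendsto_of_tendsto_of_le_of_le' tendsto_const_nhds hlim ?_ ?_
    · filter_upwards [self_mem_nhdsWithin] with x hx using h.le_of_le le_rfl hx
    · filter_upwards [self_mem_nhdsWithin, hone] with x hx hx1
      simpa using h.map_mul_le hx hx1 zero_le_one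
  · refine ContinuousAt.continuousWithinAt ?_
    have hpow : ContinuousAt (fun x => (x / t) ^ q) t :=
      (continuousAt_id.div_const t).rpow_const (Or.inl (by simp [hpos.ne']))
    have hlower : ContinuousAt (fun x => min 1 ((x / t) ^ q) * Φ t) t := by fun_prop
    have hupper : ContinuousAt (fun x => max 1 ((x / t) ^ q) * Φ t) t := by fun_prop
    have hnear : ∀ᶠ x in nhds t, min 1 ((x / t) ^ q) * Φ t ≤ Φ x ∧
        Φ x ≤ max 1 ((x / t) ^ q) * Φ t := by
      filter_upwards [lt_mem_nhds hpos] with x hx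
      have hΦt := h.nonneg hpos.le
      have hcancel : x / t * t = x := div_mul_cancel₀ x hpos.ne'
      rcases le_total x t with hxt | htx
      · have hle := h.rpow_mul_le_of_le_one (div_pos hx hpos) ((div_le_one hpos).2 hxt) hpos.le
        rw [hcancel] at hle
        exact ⟨(mul_le_mul_of_nonneg_right (min_le_right _ _) hΦt).trans hle,
          (h.le_of_le hx.le hxt).trans (le_mul_of_one_le_left hΦt (le_max_left _ _))⟩
      · have hle := h.le_rpow_mul ((one_le_div hpos).2 htx) hpos.le
        rw [hcancel] at hle
        exact ⟨(mul_le_of_le_one_left hΦt (min_le_left _ _)).trans (h.le_of_le hpos.le htx),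
          hle.trans (mul_le_mul_of_nonneg_right (le_max_right _ _) hΦt)⟩
    refine tendsto_of_tendsto_of_tendsto_of_le_of_le' ?_ ?_
      (hnear.mono fun _ hx => hx.1) (hnear.mono fun _ hx => hx.2)
    · simpa [hpos.ne'] using hlower.tendsto
    · simpa [hpos.ne'] using hupper.tendsto

lemma continuous_comp {X : Type*} [TopologicalSpace X] (h : HasPowerGrowth Φ p q) {f : X → ℝ}
    (hf : Continuous f) (hf0 : ∀ x, 0 ≤ f x) : Continuous fun x => Φ (f x) :=
  h.continuousOn.comp_continuous hf hf0

end HasPowerGrowth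

end Growth

section LewisPosition

variable {E : Type*} [NormedAddCommGroup E] [InnerProductSpace ℝ E]

lemma norm_normalize_le_one (b : E) : ‖NormedSpace.normalize b‖ ≤ 1 := by
  rw [NormedSpace.normalize, norm_smul, norm_inv, norm_norm]
  exact inv_mul_le_one

lemma norm_mul_inner_normalize (z b : E) : ‖b‖ * ⟪z, NormedSpace.normalize b⟫ = ⟪z, b⟫ := by
  rw [← real_inner_smul_right, NormedSpace.norm_smul_normalize]

lemma norm_add_inner_smul {z b : E} {τ : ℝ} (hz : ‖z‖ = 1) (hτ : ⟪z, b⟫ ^ 2 = τ * ‖b‖ ^ 2) :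
    ‖b + ⟪z, b⟫ • z‖ = √(1 + 3 * τ) * ‖b‖ := by
  rw [← Real.sqrt_sq (norm_nonneg (b + _)), ← Real.sqrt_sq (norm_nonneg b), Real.sqrt_sq
    (norm_nonneg b), ← Real.sqrt_mul_self (norm_nonneg b), ← Real.sqrt_mul' _ (by positivity)]
  congr 1
  rw [norm_add_sq_real, norm_smul, hz, real_inner_smul_right, real_inner_comm z b, mul_one,
    Real.norm_eq_abs, sq_abs]
  linear_combination 3 * hτ

lemma sqrt_one_add_three_mul_rpow_le {τ q : ℝ} (hτ0 : 0 ≤ τ) (hτ1 : τ ≤ 1) (hq : 2 ≤ q) :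
    √(1 + 3 * τ) ^ q ≤ 1 + 2 ^ q * τ := by
  have hconv := (convexOn_rpow (p := q / 2) (by linarith)).2 (Set.mem_Ici.2 zero_le_one)
    (Set.mem_Ici.2 (zero_le_four (α := ℝ))) (sub_nonneg.2 hτ1) hτ0 (sub_add_cancel 1 τ)
  have hfour : (4 : ℝ) ^ (q / 2) = 2 ^ q := by
    rw [show (4 : ℝ) = 2 ^ (2 : ℝ) by norm_num, ← Real.rpow_mul zero_le_two]
    ring_nf
  simp only [Real.one_rpow, hfour] at hconv
  calc √(1 + 3 * τ) ^ q = ((1 - τ) • (1 : ℝ) + τ • (4 : ℝ)) ^ (q / 2) := by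
        rw [Real.sqrt_eq_rpow, ← Real.rpow_mul (by positivity)]
        simp only [smul_eq_mul]
        ring_nf
    _ ≤ (1 - τ) • (1 : ℝ) + τ • 2 ^ q := hconv
    _ ≤ 1 + 2 ^ q * τ := by simp only [smul_eq_mul]; linarith

lemma HasPowerGrowth.map_norm_smul_add_inner_smul_le {Φ : ℝ → ℝ} {p q ρ τ : ℝ} {z b : E}
    (h : HasPowerGrowth Φ p q) (hρ0 : 0 ≤ ρ) (hρ1 : ρ ≤ 1) (hz : ‖z‖ = 1) (hτ0 : 0 ≤ τ)
    (hτ1 : τ ≤ 1) (hτ : ⟪z, b⟫ ^ 2 = τ * ‖b‖ ^ 2) :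
    Φ ‖ρ • (b + ⟪z, b⟫ • z)‖ ≤ ρ * ((1 + 2 ^ q * τ) * Φ ‖b‖) := by
  rw [norm_smul, Real.norm_of_nonneg hρ0, norm_add_inner_smul hz hτ]
  have hsqrt : 1 ≤ √(1 + 3 * τ) := Real.one_le_sqrt.2 (by linarith)
  calc Φ (ρ * (√(1 + 3 * τ) * ‖b‖)) ≤ ρ * Φ (√(1 + 3 * τ) * ‖b‖) :=
        h.map_mul_le hρ0 hρ1 (by positivity)
    _ ≤ ρ * (√(1 + 3 * τ) ^ q * Φ ‖b‖) := by
        gcongr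
        exact h.le_rpow_mul hsqrt (norm_nonneg _)
    _ ≤ ρ * ((1 + 2 ^ q * τ) * Φ ‖b‖) := by
        have := h.nonneg (norm_nonneg b)
        gcongr
        exact sqrt_one_add_three_mul_rpow_le hτ0 hτ1 h.two_le

variable {ι : Type*} [Fintype ι]

/-- The operators `T` for which the vectors `T (a i)` have `Φ`-modular at most `1`. Lewis' position
is obtained by maximising the determinant over this set. -/
def admissibleMaps (Φ : ℝ → ℝ) (μ : ι → ℝ) (a : ι → E) : Set (E →L[ℝ] E) :=
  {T | ∑ i, μ i * Φ ‖T (a i)‖ ≤ 1}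

variable {Φ : ℝ → ℝ} {p q : ℝ} {μ : ι → ℝ} {a : ι → E}

lemma HasPowerGrowth.le_of_mul_le_one (h : HasPowerGrowth Φ p q) {t w : ℝ} (hw : 0 < w)
    (ht : w * Φ t ≤ 1) : t ≤ max 1 (w * Φ 1)⁻¹ := by
  by_contra! hlt
  obtain ⟨h1, h2⟩ := max_lt_iff.1 hlt
  have hmul := h.mul_le h1.le zero_le_one
  rw [mul_one] at hmul
  have hlt' := (inv_lt_iff_one_lt_mul₀ (mul_pos hw (h.pos one_pos))).1 h2
  nlinarith [mul_le_mul_of_nonneg_left hmul hw.le]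

lemma exists_mem_admissibleMaps_det_pos (h : HasPowerGrowth Φ p q) (hμ : ∀ i, 0 ≤ μ i) :
    ∃ T ∈ admissibleMaps Φ μ a, 0 < T.det := by
  set B := ∑ i, μ i * Φ ‖a i‖
  have hB0 : 0 ≤ B := Finset.sum_nonneg fun i _ => mul_nonneg (hμ i) (h.nonneg (norm_nonneg _))
  have hone : (1 + B)⁻¹ ≤ 1 := inv_le_one_of_one_le₀ (by linarith)
  refine ⟨(1 + B)⁻¹ • ContinuousLinearMap.id ℝ E, ?_, ?_⟩
  · calc ∑ i, μ i * Φ ‖((1 + B)⁻¹ • ContinuousLinearMap.id ℝ E) (a i)‖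
        ≤ ∑ i, (1 + B)⁻¹ * (μ i * Φ ‖a i‖) := by
          refine Finset.sum_le_sum fun i _ => ?_
          rw [_root_.smul_apply, ContinuousLinearMap.id_apply, norm_smul,
            Real.norm_of_nonneg (by positivity), mul_left_comm]
          exact mul_le_mul_of_nonneg_left (h.map_mul_le (by positivity) hone (norm_nonneg _)) (hμ i)
      _ = (1 + B)⁻¹ * B := by rw [← Finset.mul_sum]
      _ ≤ 1 := by rw [inv_mul_le_iff₀ (by positivity)]; linarith
  · have hdet : ((1 + B)⁻¹ • ContinuousLinearMap.id ℝ E).det = (1 + B)⁻¹ ^ finrank ℝ E := by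
      have hsmul := LinearMap.det_smul (1 + B)⁻¹ (LinearMap.id : E →ₗ[ℝ] E)
      rwa [LinearMap.det_id, mul_one] at hsmul
    rw [hdet]
    positivity

variable [FiniteDimensional ℝ E]

lemma isCompact_admissibleMaps (h : HasPowerGrowth Φ p q) (hμ : ∀ i, 0 < μ i)
    (ha : Submodule.span ℝ (Set.range a) = ⊤) : IsCompact (admissibleMaps Φ μ a) := by
  let eval : (E →L[ℝ] E) →ₗ[ℝ] ι → E :=
    { toFun := fun T i => T (a i), map_add' := fun _ _ => rfl, map_smul' := fun _ _ => rfl }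
  have hker : LinearMap.ker eval = ⊥ := LinearMap.ker_eq_bot'.2 fun T hT =>
    ContinuousLinearMap.coe_injective (LinearMap.ext_on_range ha (congrFun hT))
  obtain ⟨κ, -, hκ⟩ := LinearMap.exists_antilipschitzWith eval hker
  let R : ι → ℝ := fun i => max 1 (μ i * Φ 1)⁻¹
  have hR : ∀ i, 0 ≤ R i := fun i => le_max_of_le_left zero_le_one
  have hbound : ∀ T ∈ admissibleMaps Φ μ a, ‖eval T‖ ≤ ∑ i, R i := fun T hT =>
    (pi_norm_le_iff_of_nonneg (Finset.sum_nonneg fun i _ => hR i)).2 fun i =>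
      (h.le_of_mul_le_one (hμ i) ((Finset.single_le_sum (f := fun i => μ i * Φ ‖T (a i)‖)
        (fun j _ => mul_nonneg (hμ j).le (h.nonneg (norm_nonneg _)))
        (Finset.mem_univ i)).trans hT)).trans
        (Finset.single_le_sum (fun j _ => hR j) (Finset.mem_univ i))
  have hclosed : IsClosed (admissibleMaps Φ μ a) :=
    isClosed_le (continuous_finsetSum _ fun i _ => continuous_const.mul
      (h.continuous_comp (by fun_prop) fun _ => norm_nonneg _)) continuous_const
  refine (isCompact_closedBall (0 : E →L[ℝ] E) (κ * ∑ i, R i)).of_isClosed_subset hclosed ?_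
  intro T hT
  have hdist := hκ.le_mul_dist T 0
  rw [map_zero, dist_zero_right, dist_zero_right] at hdist
  exact mem_closedBall_zero_iff.2
    (hdist.trans (mul_le_mul_of_nonneg_left (hbound T hT) κ.coe_nonneg))

lemma exists_mem_admissibleMaps_isMaxOn_det (h : HasPowerGrowth Φ p q) (hμ : ∀ i, 0 < μ i)
    (ha : Submodule.span ℝ (Set.range a) = ⊤) :
    ∃ T ∈ admissibleMaps Φ μ a, IsMaxOn ContinuousLinearMap.det (admissibleMaps Φ μ a) T ∧
      0 < T.det := by
  obtain ⟨T₀, hT₀, hpos⟩ := exists_mem_admissibleMaps_det_pos (a := a) h fun i => (hμ i).le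
  obtain ⟨T, hT, hmax⟩ := (isCompact_admissibleMaps h hμ ha).exists_isMaxOn ⟨T₀, hT₀⟩
    ContinuousLinearMap.continuous_det.continuousOn
  exact ⟨T, hT, hmax, hpos.trans_le (hmax hT₀)⟩

lemma one_add_inv_two_mul_pow_lt_two {n : ℕ} : (1 + (2 * n : ℝ)⁻¹) ^ n < 2 := by
  rcases n.eq_zero_or_pos with rfl | hn
  · norm_num
  calc (1 + (2 * n : ℝ)⁻¹) ^ n ≤ Real.exp ((2 * n : ℝ)⁻¹) ^ n := by
        gcongr
        linarith [Real.add_one_le_exp (2 * n : ℝ)⁻¹]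
    _ = Real.exp (1 / 2) := by rw [← Real.exp_nat_mul]; congr 1; field_simp
    _ < 2 := by
        rw [← pow_lt_pow_iff_left₀ (Real.exp_pos _).le zero_le_two two_ne_zero, ← Real.exp_nat_mul]
        norm_num
        linarith [Real.exp_one_lt_three]

lemma exists_det_lt_det_and_apply_eq [Nontrivial E] {T : E →L[ℝ] E} (hdet : 0 < T.det) {z : E}
    (hz : ‖z‖ = 1) :
    ∃ T' : E →L[ℝ] E, T.det < T'.det ∧
      ∀ x, T' x = (1 + (2 * finrank ℝ E : ℝ)⁻¹)⁻¹ • (T x + ⟪z, T x⟫ • z) := by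
  have hN : (0 : ℝ) < finrank ℝ E := Nat.cast_pos.2 finrank_pos
  set ρ : ℝ := (1 + (2 * finrank ℝ E : ℝ)⁻¹)⁻¹ with hρ
  let stretch : E →ₗ[ℝ] E := LinearMap.transvection (innerSL ℝ z).toLinearMap z
  have hstretch : LinearMap.det stretch = 2 := by
    rw [LinearMap.transvection.det]
    simp [hz, one_add_one_eq_two]
  refine ⟨(ρ • stretch ∘ₗ T.toLinearMap).toContinuousLinearMap, ?_, fun _ => rfl⟩
  change _ < LinearMap.det (ρ • stretch ∘ₗ T.toLinearMap)
  rw [LinearMap.det_smul, LinearMap.det_comp, hstretch, hρ, inv_pow, ← div_eq_inv_mul,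
    lt_div_iff₀' (by positivity)]
  exact mul_lt_mul_of_pos_right one_add_inv_two_mul_pow_lt_two hdet

/-- At a maximiser of the determinant, stretching along the unit vector `z` must increase the
modular beyond `1`. -/
lemma one_le_mul_sum_of_isMaxOn_det [Nontrivial E] (h : HasPowerGrowth Φ p q) (hμ : ∀ i, 0 ≤ μ i)
    {T : E →L[ℝ] E} (hT : T ∈ admissibleMaps Φ μ a)
    (hmax : IsMaxOn ContinuousLinearMap.det (admissibleMaps Φ μ a) T) (hdet : 0 < T.det) {z : E}
    (hz : ‖z‖ = 1) {τ : ι → ℝ} (hτ0 : ∀ i, 0 ≤ τ i) (hτ1 : ∀ i, τ i ≤ 1)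
    (hτ : ∀ i, ⟪z, T (a i)⟫ ^ 2 = τ i * ‖T (a i)‖ ^ 2) :
    1 ≤ 2 * 2 ^ q * finrank ℝ E * ∑ i, μ i * Φ ‖T (a i)‖ * τ i := by
  have hN : (0 : ℝ) < finrank ℝ E := Nat.cast_pos.2 finrank_pos
  obtain ⟨T', hT'det, hT'apply⟩ := exists_det_lt_det_and_apply_eq hdet hz
  set ρ : ℝ := (1 + (2 * finrank ℝ E : ℝ)⁻¹)⁻¹ with hρ
  have hρ1 : ρ ≤ 1 := inv_le_one_of_one_le₀ (le_add_of_nonneg_right (by positivity))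
  have hT' : 1 < ∑ i, μ i * Φ ‖T' (a i)‖ := not_le.1 fun hle => (hmax hle).not_gt hT'det
  have hterm : ∀ i, μ i * Φ ‖T' (a i)‖ ≤
      ρ * (μ i * Φ ‖T (a i)‖ + 2 ^ q * (μ i * Φ ‖T (a i)‖ * τ i)) := fun i => by
    rw [hT'apply]
    refine (mul_le_mul_of_nonneg_left (h.map_norm_smul_add_inner_smul_le (by positivity) hρ1 hz
      (hτ0 i) (hτ1 i) (hτ i)) (hμ i)).trans_eq ?_
    ring
  have hsum := hT'.trans_le (Finset.sum_le_sum fun i _ => hterm i)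
  rw [← Finset.mul_sum, Finset.sum_add_distrib, ← Finset.mul_sum, hρ, ← div_eq_inv_mul,
    one_lt_div (by positivity)] at hsum
  have hle : (2 * finrank ℝ E : ℝ)⁻¹ ≤ 2 ^ q * ∑ i, μ i * Φ ‖T (a i)‖ * τ i := by
    have : ∑ i, μ i * Φ ‖T (a i)‖ ≤ 1 := hT
    linarith
  rw [inv_le_iff_one_le_mul₀' (by positivity)] at hle
  linarith

lemma exists_lewis_position [Nontrivial E] (h : HasPowerGrowth Φ p q) (hμ : ∀ i, 0 < μ i)
    (ha : Submodule.span ℝ (Set.range a) = ⊤) :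
    ∃ T : E ≃L[ℝ] E, ∑ i, μ i * Φ ‖T (a i)‖ ≤ 1 ∧
      IsUnitFrame (fun i => NormedSpace.normalize (T (a i))) (fun i => μ i * Φ ‖T (a i)‖)
        (2 * 2 ^ q * finrank ℝ E) := by
  obtain ⟨T, hT, hmax, hdet⟩ := exists_mem_admissibleMaps_isMaxOn_det h hμ ha
  refine ⟨T.toContinuousLinearEquivOfDetNeZero hdet.ne', hT, ?_⟩
  set e : ι → E := fun i => NormedSpace.normalize (T (a i)) with he
  have hnorm : ∀ i, ‖e i‖ ≤ 1 := fun i => norm_normalize_le_one _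
  have hinner : ∀ z i, ⟪z, T (a i)⟫ ^ 2 = ⟪z, e i⟫ ^ 2 * ‖T (a i)‖ ^ 2 := fun z i => by
    rw [he, ← norm_mul_inner_normalize, mul_pow, mul_comm]
  have hN : (1 : ℝ) ≤ finrank ℝ E := Nat.one_le_cast.2 finrank_pos
  refine ⟨hnorm, fun i => mul_nonneg (hμ i).le (h.nonneg (norm_nonneg _)), ?_, fun z => ?_⟩
  · nlinarith [h.one_le_two_rpow]
  rcases eq_or_ne z 0 with rfl | hz
  · simp
  have hunit : ‖‖z‖⁻¹ • z‖ = 1 := norm_smul_inv_norm hz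
  have hframe := one_le_mul_sum_of_isMaxOn_det h (fun i => (hμ i).le) hT hmax hdet hunit
    (fun i => sq_nonneg _) (fun i => ?_) (hinner _)
  · have hscale : ∑ i, μ i * Φ ‖T (a i)‖ * ⟪‖z‖⁻¹ • z, e i⟫ ^ 2 =
        (‖z‖ ^ 2)⁻¹ * ∑ i, μ i * Φ ‖T (a i)‖ * ⟪z, e i⟫ ^ 2 := by
      rw [Finset.mul_sum]
      refine Finset.sum_congr rfl fun i _ => ?_
      rw [real_inner_smul_left, mul_pow, inv_pow, mul_left_comm]
    rwa [hscale, mul_left_comm, ← div_eq_inv_mul, one_le_div (by positivity)] at hframe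
  · rw [sq_le_one_iff_abs_le_one]
    exact (abs_real_inner_le_norm _ _).trans (by rw [hunit, one_mul]; exact hnorm i)

end LewisPosition

section Sampling

lemma exp_neg_le_one_sub_half {x : ℝ} (hx0 : 0 ≤ x) (hx1 : x ≤ 1) : Real.exp (-x) ≤ 1 - x / 2 := by
  rw [Real.exp_neg, inv_le_iff_one_le_mul₀ (Real.exp_pos x)]
  nlinarith [Real.add_one_le_exp x]

variable {ι : Type*} [Fintype ι] {P : ι → ℝ}

lemma sum_mul_exp_neg_le (hP : ∀ i, 0 ≤ P i) (hP1 : ∑ i, P i = 1) {g : ι → ℝ}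
    (hg0 : ∀ i, 0 ≤ g i) (hg1 : ∀ i, g i ≤ 1) :
    ∑ i, P i * Real.exp (-g i) ≤ Real.exp (-((∑ i, P i * g i) / 2)) := by
  calc ∑ i, P i * Real.exp (-g i) ≤ ∑ i, (P i - P i * g i / 2) := by
        refine Finset.sum_le_sum fun i _ => ?_
        linarith [mul_le_mul_of_nonneg_left (exp_neg_le_one_sub_half (hg0 i) (hg1 i)) (hP i)]
    _ = 1 - (∑ i, P i * g i) / 2 := by rw [Finset.sum_sub_distrib, hP1, Finset.sum_div]
    _ ≤ _ := by linarith [Real.add_one_le_exp (-((∑ i, P i * g i) / 2))]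

/-- Markov's inequality for `exp (-∑ g)`: the lower Chernoff bound, in expectation. -/
lemma sum_prod_mul_exp_le (hP : ∀ i, 0 ≤ P i) (hP1 : ∑ i, P i = 1) {g : ι → ℝ}
    (hg0 : ∀ i, 0 ≤ g i) (hg1 : ∀ i, g i ≤ 1) (m : ℕ) :
    ∑ s : Fin m → ι, (∏ k, P (s k)) * Real.exp (m * (∑ i, P i * g i) / 4 - ∑ k, g (s k)) ≤
      Real.exp (-(m * (∑ i, P i * g i) / 4)) := by
  have hsplit : ∀ s : Fin m → ι,
      (∏ k, P (s k)) * Real.exp (m * (∑ i, P i * g i) / 4 - ∑ k, g (s k)) =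
        Real.exp (m * (∑ i, P i * g i) / 4) * ∏ k, P (s k) * Real.exp (-g (s k)) := fun s => by
    rw [sub_eq_add_neg, Real.exp_add, ← Finset.sum_neg_distrib, Real.exp_sum,
      Finset.prod_mul_distrib, mul_left_comm]
  calc _ = Real.exp (m * (∑ i, P i * g i) / 4) * (∑ i, P i * Real.exp (-g i)) ^ m := by
        rw [Finset.sum_congr rfl fun s _ => hsplit s, Fintype.sum_pow, ← Finset.mul_sum]
    _ ≤ Real.exp (m * (∑ i, P i * g i) / 4) * Real.exp (-((∑ i, P i * g i) / 2)) ^ m := by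
        have := Finset.sum_nonneg fun i (_ : i ∈ Finset.univ) =>
          mul_nonneg (hP i) (Real.exp_pos (-g i)).le
        gcongr
        exact sum_mul_exp_neg_le hP hP1 hg0 hg1
    _ = _ := by
        rw [← Real.exp_nat_mul, ← Real.exp_add]
        ring_nf

lemma exists_sample_forall_le_sum_of_unit {κ : Type*} (hP : ∀ i, 0 ≤ P i) (hP1 : ∑ i, P i = 1)
    (m : ℕ) (J : Finset κ) {g : κ → ι → ℝ} (hg0 : ∀ j i, 0 ≤ g j i) (hg1 : ∀ j i, g j i ≤ 1)
    (hJ : ∑ j ∈ J, Real.exp (-(m * (∑ i, P i * g j i) / 4)) < 1) :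
    ∃ s : Fin m → ι, ∀ j ∈ J, m * (∑ i, P i * g j i) / 4 ≤ ∑ k, g j (s k) := by
  classical
  have htotal : ∑ s : Fin m → ι, ∏ k, P (s k) = 1 := by rw [← Fintype.sum_pow, hP1, one_pow]
  let bad : (Fin m → ι) → ℝ := fun s =>
    ∑ j ∈ J, Real.exp (m * (∑ i, P i * g j i) / 4 - ∑ k, g j (s k))
  have hmean : ∑ s : Fin m → ι, (∏ k, P (s k)) * bad s < ∑ s : Fin m → ι, ∏ k, P (s k) := by
    rw [htotal]
    refine lt_of_le_of_lt ?_ hJ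
    have hexpand : ∀ s, (∏ k, P (s k)) * bad s = ∑ j ∈ J, (∏ k, P (s k)) *
        Real.exp (m * (∑ i, P i * g j i) / 4 - ∑ k, g j (s k)) := fun s => Finset.mul_sum ..
    rw [Finset.sum_congr rfl fun s _ => hexpand s, Finset.sum_comm]
    exact Finset.sum_le_sum fun j _ => sum_prod_mul_exp_le hP hP1 (hg0 j) (hg1 j) m
  obtain ⟨s, -, hs⟩ := Finset.exists_lt_of_sum_lt hmean
  have hbad : bad s < 1 := by
    by_contra! hge
    exact hs.not_ge (le_mul_of_one_le_right (Finset.prod_nonneg fun k _ => hP _) hge)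
  refine ⟨s, fun j hj => ?_⟩
  have hexp : Real.exp (m * (∑ i, P i * g j i) / 4 - ∑ k, g j (s k)) < 1 :=
    (Finset.single_le_sum (f := fun j => Real.exp (m * (∑ i, P i * g j i) / 4 - ∑ k, g j (s k)))
      (fun _ _ => (Real.exp_pos _).le) hj).trans_lt hbad
  linarith [Real.exp_lt_one_iff.1 hexp]

lemma exists_sample_forall_le_sum {κ : Type*} (hP : ∀ i, 0 ≤ P i) (hP1 : ∑ i, P i = 1) {m : ℕ}
    {J : Finset κ} {g : κ → ι → ℝ} {B : κ → ℝ} {δ : ℝ} (hδ : 0 ≤ δ) (hB : ∀ j, 0 < B j)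
    (hg0 : ∀ j i, 0 ≤ g j i) (hgB : ∀ j i, g j i ≤ B j)
    (hJ : ∑ j ∈ J, Real.exp (-(m * δ / (4 * B j))) < 1) :
    ∃ s : Fin m → ι, ∀ j ∈ J, m / 4 * (∑ i, P i * g j i - δ) ≤ ∑ k, g j (s k) := by
  classical
  have hmean : ∀ j, ∑ i, P i * (g j i / B j) = (∑ i, P i * g j i) / B j := fun j => by
    simp_rw [← mul_div_assoc, Finset.sum_div]
  let large : Finset κ := J.filter fun j => δ ≤ ∑ i, P i * g j i
  have hlarge : ∑ j ∈ large, Real.exp (-(m * (∑ i, P i * (g j i / B j)) / 4)) < 1 := by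
    refine lt_of_le_of_lt (Finset.sum_le_sum fun j hj => ?_) ((Finset.sum_le_sum_of_subset_of_nonneg
      (Finset.filter_subset _ J) fun _ _ _ => (Real.exp_pos _).le).trans_lt hJ)
    have hBj := hB j
    rw [hmean, Real.exp_le_exp, neg_le_neg_iff, mul_comm 4, ← div_div, ← mul_div_assoc]
    gcongr
    exact (Finset.mem_filter.1 hj).2
  obtain ⟨s, hs⟩ := exists_sample_forall_le_sum_of_unit hP hP1 m large
    (fun j i => div_nonneg (hg0 j i) (hB j).le) (fun j i => (div_le_one (hB j)).2 (hgB j i)) hlarge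
  refine ⟨s, fun j hj => ?_⟩
  rcases le_or_gt δ (∑ i, P i * g j i) with hle | hlt
  · have hsj := hs j (Finset.mem_filter.2 ⟨hj, hle⟩)
    rw [hmean, ← Finset.sum_div, ← mul_div_assoc, div_right_comm,
      div_le_div_iff_of_pos_right (hB j)] at hsj
    have : 0 ≤ m / 4 * δ := by positivity
    linarith
  · exact (mul_nonpos_of_nonneg_of_nonpos (by positivity) (by linarith)).trans
      (Finset.sum_nonneg fun _ _ => hg0 _ _)

/-- Sampling from `P = μ (1 + h) / (1 + ∑ μ h)` with importance weights `R = μ / P` keeps both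
`R` and `R h` bounded. -/
lemma exists_importance_density {μ h : ι → ℝ} (hμ : ∀ i, 0 ≤ μ i) (hμ1 : ∑ i, μ i = 1)
    (hh : ∀ i, 0 ≤ h i) (hμh : ∑ i, μ i * h i ≤ 1) :
    ∃ P R : ι → ℝ, (∀ i, 0 ≤ P i) ∧ ∑ i, P i = 1 ∧ (∀ i, P i * R i = μ i) ∧
      (∀ i, 0 < R i) ∧ (∀ i, R i ≤ 2) ∧ ∀ i, R i * h i ≤ 2 := by
  set S := ∑ i, μ i * h i
  have hS0 : 0 ≤ S := Finset.sum_nonneg fun i _ => mul_nonneg (hμ i) (hh i)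
  have hpos : ∀ i, 0 < 1 + h i := fun i => by linarith [hh i]
  refine ⟨fun i => μ i * (1 + h i) / (1 + S), fun i => (1 + S) / (1 + h i),
    fun i => div_nonneg (mul_nonneg (hμ i) (hpos i).le) (by linarith), ?_, fun i => ?_,
    fun i => div_pos (by linarith) (hpos i), fun i => ?_, fun i => ?_⟩
  · simp_rw [mul_add, mul_one]
    rw [← Finset.sum_div, Finset.sum_add_distrib, hμ1, div_self (by linarith)]
  · have := (hpos i).ne'
    field_simp
  · rw [div_le_iff₀ (hpos i)]
    linarith [hh i]
  · rw [div_mul_eq_mul_div, div_le_iff₀ (hpos i)]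
    nlinarith [hh i]

lemma exists_weighted_sample_forall_le_sum {κ : Type*} {μ h : ι → ℝ} (hμ : ∀ i, 0 ≤ μ i)
    (hμ1 : ∑ i, μ i = 1) (hh : ∀ i, 0 ≤ h i) (hμh : ∑ i, μ i * h i ≤ 1) {m : ℕ} {J : Finset κ}
    {g : κ → ι → ℝ} {B : κ → ℝ} {δ : ℝ} (hδ : 0 ≤ δ) (hB : ∀ j, 0 < B j)
    (hg0 : ∀ j i, 0 ≤ g j i) (hgB : ∀ j i, g j i ≤ B j * h i)
    (hJ : ∑ j ∈ J, Real.exp (-(m * δ / (8 * B j))) < 1) :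
    ∃ (s : Fin m → ι) (R : ι → ℝ), (∀ i, 0 < R i) ∧ (∀ i, R i ≤ 2) ∧
      ∀ j ∈ J, m / 4 * (∑ i, μ i * g j i - δ) ≤ ∑ k, R (s k) * g j (s k) := by
  obtain ⟨P, R, hP, hP1, hPR, hR0, hR2, hRh⟩ := exists_importance_density hμ hμ1 hh hμh
  have hbound : ∀ j i, R i * g j i ≤ 2 * B j := fun j i => by
    nlinarith [mul_le_mul_of_nonneg_left (hgB j i) (hR0 i).le,
      mul_le_mul_of_nonneg_left (hRh i) (hB j).le]
  have hcount : ∑ j ∈ J, Real.exp (-(m * δ / (4 * (2 * B j)))) < 1 := by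
    simpa only [← mul_assoc, show (4 : ℝ) * 2 = 8 by norm_num] using hJ
  obtain ⟨s, hs⟩ := exists_sample_forall_le_sum hP hP1 hδ (fun j => mul_pos two_pos (hB j))
    (fun j i => mul_nonneg (hR0 i).le (hg0 j i)) hbound hcount
  refine ⟨s, R, hR0, hR2, fun j hj => ?_⟩
  simpa only [← mul_assoc, hPR] using hs j hj

end Sampling

section Levels

/-- The dyadic scales `2 ^ k / 4`. -/
noncomputable def level (k : ℕ) : ℝ := 2 ^ k / 4

lemma level_pos (k : ℕ) : 0 < level k := by unfold level; positivity

lemma level_zero : level 0 = 1 / 4 := by simp [level]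

lemma level_succ (k : ℕ) : level (k + 1) = 2 * level k := by unfold level; ring

lemma level_mono : Monotone level := monotone_nat_of_le_succ fun k => by
  linarith [level_succ k, level_pos k]

lemma card_filter_level_le_three (n : ℕ) (x : ℝ) :
    ((Finset.range n).filter fun k => level k / 2 < x ∧ x ≤ 5 / 2 * level k).card ≤ 3 := by
  set A := (Finset.range n).filter fun k => level k / 2 < x ∧ x ≤ 5 / 2 * level k
  rcases A.eq_empty_or_nonempty with hempty | hne
  · simp [hempty]
  suffices hsub : A ⊆ Finset.Ico (A.min' hne) (A.min' hne + 3) by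
    simpa using Finset.card_le_card hsub
  intro k hk
  refine Finset.mem_Ico.2 ⟨A.min'_le k hk, ?_⟩
  by_contra! hge
  have hmin := (Finset.mem_filter.1 (A.min'_mem hne)).2.2
  have hmono := level_mono hge
  simp only [level_succ] at hmono
  linarith [(Finset.mem_filter.1 hk).2.1, level_pos (A.min' hne)]

lemma exists_lt_level_le {n : ℕ} {x : ℝ} (hx0 : level 0 < x) (hxn : x ≤ level n) :
    ∃ k < n, level k < x ∧ x ≤ 2 * level k := by
  induction n with
  | zero => exact absurd hxn hx0.not_ge
  | succ n ih =>
    rcases le_or_gt x (level n) with hle | hlt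
    · obtain ⟨k, hk, hkx⟩ := ih hle
      exact ⟨k, hk.trans n.lt_succ_self, hkx⟩
    · exact ⟨n, n.lt_succ_self, hlt, hxn.trans_eq (level_succ n)⟩

open Classical in
/-- The value `Φ (v y)` if `y` is comparable with the scale `t`, and `0` otherwise. The constants
leave room for an error `t / 4` in `y`. -/
noncomputable def levelPart (Φ : ℝ → ℝ) (t v y : ℝ) : ℝ :=
  if 3 / 4 * t < y ∧ y ≤ 9 / 4 * t then Φ (v * y) else 0

variable {Φ Ψ : ℝ → ℝ} {p q : ℝ} {t v x y : ℝ}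

lemma levelPart_nonneg (h : HasPowerGrowth Φ p q) (hv : 0 ≤ v) :
    0 ≤ levelPart Φ t v y := by
  unfold levelPart
  split_ifs with hy
  · exact h.nonneg (mul_nonneg hv (by linarith [hy.1, hy.2]))
  · exact le_rfl

lemma levelPart_le (h : HasPowerGrowth Φ p q) (hΨmono : MonotoneOn Ψ (Set.Ici 0))
    (hΨ : ∀ {s}, 0 < s → 0 ≤ Ψ s) {K : ℝ} (hK0 : 0 ≤ K)
    (hK : ∀ {t s}, 0 < t → 0 < s → Φ (t * s) ≤ K * (Φ t * Ψ s)) (ht : 0 < t) (hv : 0 ≤ v) :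
    levelPart Φ t v y ≤ K * (Φ v * Ψ (3 * t)) := by
  have hΨt : 0 ≤ Ψ (3 * t) := hΨ (by positivity)
  have hrhs : 0 ≤ K * (Φ v * Ψ (3 * t)) := mul_nonneg hK0 (mul_nonneg (h.nonneg hv) hΨt)
  unfold levelPart
  split_ifs with hy
  · rcases hv.eq_or_lt with rfl | hv0
    · simpa only [zero_mul, h.map_zero] using hrhs
    · have hy0 : 0 < y := by linarith [hy.1]
      refine (hK hv0 hy0).trans ?_
      have hmono : Ψ y ≤ Ψ (3 * t) :=
        hΨmono hy0.le (Set.mem_Ici.2 (by positivity)) (by linarith [hy.2])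
      have := h.nonneg hv
      gcongr
  · exact hrhs

lemma HasPowerGrowth.map_le_of_le_two_mul (h : HasPowerGrowth Φ p q) (hx : 0 ≤ x) (hy : 0 ≤ y)
    (hxy : x ≤ 2 * y) : Φ x ≤ 2 ^ q * Φ y :=
  (h.le_of_le hx hxy).trans (h.le_rpow_mul one_le_two hy)

lemma map_le_levelPart (h : HasPowerGrowth Φ p q) (hv : 0 ≤ v)
    (hxy : |x - y| ≤ t / 4) (htx : t < x) (hxt : x ≤ 2 * t) :
    Φ (v * x) ≤ 2 ^ q * levelPart Φ t v y := by
  obtain ⟨hl, hr⟩ := abs_le.1 hxy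
  rw [levelPart, if_pos ⟨by linarith, by linarith⟩]
  refine h.map_le_of_le_two_mul (mul_nonneg hv (by linarith)) (mul_nonneg hv (by linarith)) ?_
  nlinarith

open Classical in
lemma levelPart_le_ite (h : HasPowerGrowth Φ p q) (hv : 0 ≤ v) (hx : 0 ≤ x)
    (hxy : |x - y| ≤ t / 4) :
    levelPart Φ t v y ≤ if t / 2 < x ∧ x ≤ 5 / 2 * t then 2 ^ q * Φ (v * x) else 0 := by
  obtain ⟨hl, hr⟩ := abs_le.1 hxy
  have hmap := h.nonneg (mul_nonneg hv hx)
  unfold levelPart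
  split_ifs with hy hx' hx'
  · refine h.map_le_of_le_two_mul (mul_nonneg hv (by linarith)) (mul_nonneg hv hx) ?_
    nlinarith [hy.1]
  · exact absurd ⟨by linarith [hy.1], by linarith [hy.2]⟩ hx'
  · positivity
  · exact le_rfl

lemma sum_levelPart_le (h : HasPowerGrowth Φ p q) (hv : 0 ≤ v) (hx : 0 ≤ x) {n : ℕ} {y : ℕ → ℝ}
    (hxy : ∀ k, |x - y k| ≤ level k / 4) :
    ∑ k ∈ Finset.range n, levelPart Φ (level k) v (y k) ≤ 3 * (2 ^ q * Φ (v * x)) := by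
  classical
  have hmap := h.nonneg (mul_nonneg hv hx)
  refine (Finset.sum_le_sum fun k _ =>
    levelPart_le_ite h hv hx (hxy k)).trans ?_
  rw [← Finset.sum_filter, Finset.sum_const, nsmul_eq_mul]
  gcongr
  exact_mod_cast card_filter_level_le_three n x

lemma map_mul_le_add_sum_levelPart (h : HasPowerGrowth Φ p q) (hv : 0 ≤ v) (hx : 0 ≤ x) {n : ℕ}
    {y : ℕ → ℝ} (hxn : x ≤ level n) (hxy : ∀ k, |x - y k| ≤ level k / 4) :
    Φ (v * x) ≤ Φ v / 4 + 2 ^ q * ∑ k ∈ Finset.range n, levelPart Φ (level k) v (y k) := by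
  have hpart : ∀ k ∈ Finset.range n, 0 ≤ levelPart Φ (level k) v (y k) :=
    fun k _ => levelPart_nonneg h hv
  have hquarter : 0 ≤ Φ v / 4 := div_nonneg (h.nonneg hv) zero_le_four
  rcases le_or_gt x (level 0) with hsmall | hlarge
  · have hle : Φ (v * x) ≤ Φ v / 4 := by
      rw [level_zero] at hsmall
      rw [mul_comm]
      refine (h.map_mul_le hx (by linarith) hv).trans ?_
      nlinarith [h.nonneg hv]
    exact le_add_of_le_of_nonneg hle (mul_nonneg (by positivity) (Finset.sum_nonneg hpart))
  · obtain ⟨k, hk, hkx, hxk⟩ := exists_lt_level_le hlarge hxn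
    refine le_add_of_nonneg_of_le hquarter
      ((map_le_levelPart h hv (hxy k) hkx hxk).trans ?_)
    gcongr
    exact Finset.single_le_sum hpart (Finset.mem_range.2 hk)

end Levels

section SampledFrame

/-- The modular `∑ i, w i Φ(|g i|)` of `g` with respect to the discrete measure with weights `w`. -/
noncomputable def modular {ι : Type*} [Fintype ι] (Φ : ℝ → ℝ) (w g : ι → ℝ) : ℝ :=
  ∑ i, w i * Φ |g i|

variable {E : Type*} [NormedAddCommGroup E] [InnerProductSpace ℝ E] {ι : Type*} [Fintype ι]
  {Φ : ℝ → ℝ} {p q r : ℝ} {μ : ι → ℝ} {b : ι → E}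

lemma norm_mul_abs_inner_normalize (z b : E) :
    ‖b‖ * |⟪z, NormedSpace.normalize b⟫| = |⟪z, b⟫| := by
  rw [← norm_mul_inner_normalize z b, abs_mul, abs_norm]

lemma powerSum_normalize_le_two (h : HasPowerGrowth Φ p q) (hr0 : 0 ≤ r) (hrp : r ≤ p)
    (hμ : ∀ i, 0 ≤ μ i) (hb : ∑ i, μ i * Φ ‖b i‖ ≤ 1) {z : E}
    (hz : modular Φ μ (fun i => ⟪z, b i⟫) ≤ 1) :
    powerSum (fun i => NormedSpace.normalize (b i)) (fun i => μ i * Φ ‖b i‖) r z ≤ 2 := by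
  refine le_trans ?_ (add_le_add hb hz |>.trans_eq one_add_one_eq_two)
  rw [powerSum, modular, ← Finset.sum_add_distrib]
  refine Finset.sum_le_sum fun i _ => ?_
  rw [← norm_mul_abs_inner_normalize z (b i), mul_assoc, ← mul_add]
  refine mul_le_mul_of_nonneg_left ?_ (hμ i)
  set x := |⟪z, NormedSpace.normalize (b i)⟫|
  have hv := h.nonneg (norm_nonneg (b i))
  have hx0 : 0 ≤ x := abs_nonneg _
  rcases le_total x 1 with hx1 | hx1
  · have := h.nonneg (mul_nonneg (norm_nonneg (b i)) hx0)
    nlinarith [Real.rpow_le_one hx0 hx1 hr0]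
  · calc Φ ‖b i‖ * x ^ r ≤ x ^ p * Φ ‖b i‖ := by
          rw [mul_comm]
          gcongr
      _ ≤ Φ (‖b i‖ * x) := by
          rw [mul_comm ‖b i‖]
          exact h.rpow_mul_le hx1 (norm_nonneg _)
      _ ≤ _ := le_add_of_nonneg_left hv

lemma sum_card_mul_exp_lt_one {α : Type*} {C : ℕ → Finset α} {X Y : ℕ → ℝ} {n : ℕ}
    (hC : ∀ k < n, ((C k).card : ℝ) ≤ Real.exp (X k)) (hXY : ∀ k < n, X k + n ≤ Y k) :
    ∑ k ∈ Finset.range n, (C k).card * Real.exp (-Y k) < 1 := by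
  calc ∑ k ∈ Finset.range n, (C k).card * Real.exp (-Y k)
      ≤ ∑ _k ∈ Finset.range n, Real.exp (-n) := Finset.sum_le_sum fun k hk => by
        have hk := Finset.mem_range.1 hk
        refine (mul_le_mul_of_nonneg_right (hC k hk) (Real.exp_pos _).le).trans ?_
        rw [← Real.exp_add]
        exact Real.exp_le_exp.2 (by linarith [hXY k hk])
    _ = n * Real.exp (-n) := by rw [Finset.sum_const, Finset.card_range, nsmul_eq_mul]
    _ < 1 := by
        rw [Real.exp_neg, ← div_eq_mul_inv, div_lt_one (Real.exp_pos _)]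
        linarith [Real.add_one_le_exp (n : ℝ)]

lemma exists_sample_forall_levelPart (h : HasPowerGrowth Φ p q) (hμ : ∀ i, 0 ≤ μ i)
    (hμ1 : ∑ i, μ i = 1) (hb : ∑ i, μ i * Φ ‖b i‖ ≤ 1) {e : ι → E} {β : ℕ → ℝ} {m : ℕ}
    (hβ0 : ∀ k, 0 < β k)
    (hβ : ∀ k i y, levelPart Φ (level k) ‖b i‖ y ≤ β k * Φ ‖b i‖) {C : ℕ → Finset E} {X : ℕ → ℝ}
    {n : ℕ} (hC : ∀ k < n, ((C k).card : ℝ) ≤ Real.exp (X k)) {δ : ℝ} (hδ : 0 ≤ δ)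
    (hm : ∀ k < n, X k + n ≤ m * δ / (8 * β k)) :
    ∃ (s : Fin m → ι) (R : ι → ℝ), (∀ i, 0 < R i) ∧ (∀ i, R i ≤ 2) ∧ ∀ k < n, ∀ c ∈ C k,
      m / 4 * (∑ i, μ i * levelPart Φ (level k) ‖b i‖ |⟪c, e i⟫| - δ) ≤
        ∑ j, R (s j) * levelPart Φ (level k) ‖b (s j)‖ |⟪c, e (s j)⟫| := by
  obtain ⟨s, R, hR0, hR2, hs⟩ := exists_weighted_sample_forall_le_sum (m := m)
    (J := (Finset.range n).sigma C)
    (g := fun j i => levelPart Φ (level j.1) ‖b i‖ |⟪j.2, e i⟫|) (B := fun j => β j.1) hμ hμ1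
    (fun i => h.nonneg (norm_nonneg (b i))) hb hδ (fun j => hβ0 j.1)
    (fun _ i => levelPart_nonneg h (norm_nonneg _)) (fun j i => hβ j.1 i _) (by
      rw [Finset.sum_sigma]
      simpa only [Finset.sum_const, nsmul_eq_mul] using sum_card_mul_exp_lt_one hC hm)
  exact ⟨s, R, hR0, hR2, fun k hk c hc =>
    hs ⟨k, c⟩ (Finset.mem_sigma.2 ⟨Finset.mem_range.2 hk, hc⟩)⟩

/-- With `y k` an approximation of `x = |⟪z, e ·⟫|` at scale `level k`, a lower bound of the sampled
level parts of `y` yields one of the sampled modular, because the levels of `y` decompose the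
modular of `z` up to constants. -/
lemma le_sum_of_forall_le_sum_levelPart (h : HasPowerGrowth Φ p q) {κ : Type*} [Fintype κ]
    (hμ : ∀ i, 0 ≤ μ i) {v x : ι → ℝ} (hv : ∀ i, 0 ≤ v i) (hvμ : ∑ i, μ i * Φ (v i) ≤ 1)
    (hx : ∀ i, 0 ≤ x i) {n : ℕ} (hxn : ∀ i, x i ≤ level n) {y : ℕ → ι → ℝ}
    (hxy : ∀ k i, |x i - y k i| ≤ level k / 4) (hone : ∑ i, μ i * Φ (v i * x i) = 1) {R : ι → ℝ}
    (hR : ∀ i, 0 ≤ R i) {s : κ → ι} {m δ : ℝ} (hm : 0 ≤ m) (hδ : n * δ ≤ (2 ^ q)⁻¹ / 4)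
    (hs : ∀ k < n, m / 4 * (∑ i, μ i * levelPart Φ (level k) (v i) (y k i) - δ) ≤
      ∑ j, R (s j) * levelPart Φ (level k) (v (s j)) (y k (s j))) :
    m * (24 * (2 ^ q) ^ 2)⁻¹ ≤ ∑ j, R (s j) * Φ (v (s j) * x (s j)) := by
  set E : ℕ → ℝ := fun k => ∑ i, μ i * levelPart Φ (level k) (v i) (y k i)
  have hQ : (0 : ℝ) < 2 ^ q := by positivity
  have hmain : 3 / 4 ≤ 2 ^ q * ∑ k ∈ Finset.range n, E k := by
    have hsum : (1 : ℝ) ≤ ∑ i, (μ i * Φ (v i) / 4 +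
        2 ^ q * ∑ k ∈ Finset.range n, μ i * levelPart Φ (level k) (v i) (y k i)) := by
      rw [← hone]
      refine Finset.sum_le_sum fun i _ => ?_
      rw [← Finset.mul_sum, mul_left_comm, mul_div_assoc, ← mul_add]
      exact mul_le_mul_of_nonneg_left
        (map_mul_le_add_sum_levelPart h (hv i) (hx i) (hxn i) fun k => hxy k i) (hμ i)
    rw [Finset.sum_add_distrib, ← Finset.sum_div, ← Finset.mul_sum, Finset.sum_comm] at hsum
    linarith
  have hsampled : ∑ k ∈ Finset.range n, m / 4 * (E k - δ) ≤
      3 * (2 ^ q * ∑ j, R (s j) * Φ (v (s j) * x (s j))) := by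
    refine (Finset.sum_le_sum fun k hk => hs k (Finset.mem_range.1 hk)).trans ?_
    rw [Finset.sum_comm, Finset.mul_sum, Finset.mul_sum]
    refine Finset.sum_le_sum fun j _ => ?_
    rw [← Finset.mul_sum, mul_left_comm (2 ^ q), mul_left_comm 3]
    exact mul_le_mul_of_nonneg_left
      (sum_levelPart_le h (hv _) (hx _) fun k => hxy k (s j)) (hR _)
  rw [← Finset.mul_sum, Finset.sum_sub_distrib, Finset.sum_const, Finset.card_range,
    nsmul_eq_mul] at hsampled
  have hlower : (2 ^ q)⁻¹ / 2 ≤ ∑ k ∈ Finset.range n, E k - n * δ := by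
    rw [← div_le_iff₀' hQ, div_eq_mul_inv] at hmain
    linarith
  have hchain := (mul_le_mul_of_nonneg_left hlower (by positivity : 0 ≤ m / 4)).trans hsampled
  calc m * (24 * (2 ^ q) ^ 2)⁻¹ = (3 * 2 ^ q)⁻¹ * (m / 4 * ((2 ^ q)⁻¹ / 2)) := by
        field_simp
        ring
    _ ≤ (3 * 2 ^ q)⁻¹ * (3 * (2 ^ q * ∑ j, R (s j) * Φ (v (s j) * x (s j)))) := by gcongr
    _ = _ := by field_simp

lemma IsUnitFrame.norm_le_of_rpow_le {e : ι → E} {ν : ι → ℝ} {D : ℝ} (h : IsUnitFrame e ν D)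
    (hr0 : 0 < r) (hr : r ≤ 2) {z : E} (hz : powerSum e ν r z ≤ 2) {t : ℝ} (ht : 0 ≤ t)
    (hDt : 2 * D ≤ t ^ r) : ‖z‖ ≤ t := by
  rcases eq_or_ne z 0 with rfl | hz0
  · simpa using ht
  · refine (Real.rpow_le_rpow_iff (norm_nonneg z) ht hr0).1 ?_
    nlinarith [h.norm_rpow_le_mul_powerSum hr hz0, h.one_le]

/-- The factor by which one sampling step may decrease a unit modular. -/
noncomputable def samplingLoss (q : ℝ) : ℝ := (48 * (2 ^ q) ^ 2)⁻¹

lemma samplingLoss_pos (q : ℝ) : 0 < samplingLoss q := by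
  unfold samplingLoss
  positivity

variable [FiniteDimensional ℝ E] [MeasurableSpace E] [BorelSpace E]

lemma exists_sample_of_isUnitFrame (h : HasPowerGrowth Φ p q) (hμ : ∀ i, 0 ≤ μ i)
    (hμ1 : ∑ i, μ i = 1) (hb : ∑ i, μ i * Φ ‖b i‖ ≤ 1) {D L : ℝ}
    (hframe : IsUnitFrame (fun i => NormedSpace.normalize (b i)) (fun i => μ i * Φ ‖b i‖) D)
    (hr1 : 1 ≤ r) (hr2 : r ≤ 2) (hrp : r ≤ p) (hL : 1 ≤ L)
    (hgauss : IsGaussianMedianBound (fun i => NormedSpace.normalize (b i)) L) {β : ℕ → ℝ}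
    (hβ0 : ∀ k, 0 < β k) (hβ : ∀ k i y, levelPart Φ (level k) ‖b i‖ y ≤ β k * Φ ‖b i‖) {n m : ℕ}
    (hn : 2 * D ≤ level n ^ r) (hm0 : 0 < m)
    (hm : ∀ k < n, 160 * (D * L * (level k / 4) ^ (-r)) + n ≤
      m * ((2 ^ q)⁻¹ / (4 * n)) / (8 * β k)) :
    ∃ (s : Fin m → ι) (w : Fin m → ℝ), (∀ j, 0 < w j) ∧ ∑ j, w j = 1 ∧
      ∀ z, modular Φ μ (fun i => ⟪z, b i⟫) = 1 →
        samplingLoss q ≤ modular Φ w fun j => ⟪z, b (s j)⟫ := by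
  set e : ι → E := fun i => NormedSpace.normalize (b i) with he
  choose C hCcard hCnet using fun k => hframe.exists_net hr1 hr2 hL hgauss
    (t := level k / 4) (div_pos (level_pos k) four_pos)
  obtain ⟨s, R, hR0, hR2, hs⟩ := exists_sample_forall_levelPart (e := e) h hμ hμ1 hb hβ0 hβ
    (fun k _ => hCcard k) (by positivity) hm
  have : Nonempty (Fin m) := ⟨⟨0, hm0⟩⟩
  have hW0 : 0 < ∑ j, R (s j) := Finset.sum_pos (fun j _ => hR0 _) Finset.univ_nonempty
  have hW : ∑ j, R (s j) ≤ 2 * m := by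
    simpa [mul_comm] using Finset.sum_le_card_nsmul Finset.univ _ 2 fun j _ => hR2 (s j)
  refine ⟨s, fun j => R (s j) / ∑ j, R (s j), fun j => div_pos (hR0 _) hW0,
    by rw [← Finset.sum_div, div_self hW0.ne'], fun z hz => ?_⟩
  have hpow := powerSum_normalize_le_two h (zero_le_one.trans hr1) hrp hμ hb hz.le
  have hnorm := hframe.norm_le_of_rpow_le (zero_lt_one.trans_le hr1) hr2 hpow (level_pos n).le hn
  choose c hcC hcz using fun k => hCnet k z hpow
  have hsum := le_sum_of_forall_le_sum_levelPart h hμ (fun i => norm_nonneg (b i)) hb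
    (x := fun i => |⟪z, e i⟫|) (fun i => abs_nonneg _)
    (fun i => (hframe.abs_inner_le_norm z i).trans hnorm) (y := fun k i => |⟪c k, e i⟫|)
    (fun k i => (abs_abs_sub_abs_le_abs_sub _ _).trans
      (by rw [← inner_sub_left]; exact not_apart_iff.1 (hcz k) i))
    (by simpa only [he, norm_mul_abs_inner_normalize, modular] using hz)
    (fun i => (hR0 i).le) (s := s) (Nat.cast_nonneg m) ?_ fun k hk => hs k hk (c k) (hcC k)
  · simp only [he, norm_mul_abs_inner_normalize] at hsum
    simp only [modular, div_mul_eq_mul_div]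
    rw [← Finset.sum_div, le_div_iff₀ hW0]
    calc samplingLoss q * _ ≤ samplingLoss q * (2 * m) :=
          mul_le_mul_of_nonneg_left hW (samplingLoss_pos q).le
      _ = m * (24 * (2 ^ q) ^ 2 : ℝ)⁻¹ := by unfold samplingLoss; field_simp; ring
      _ ≤ _ := hsum
  · rcases eq_or_ne (n : ℝ) 0 with hn0 | hn0
    · rw [hn0, zero_mul]
      positivity
    · exact le_of_eq (by field_simp)

end SampledFrame

section SampleSize

/-- Two-sided power growth of an increasing `Ψ > 0` on `(0, ∞)`: `Ψ t / t ^ p` is almost increasing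
with constant `a`, and `Ψ t / t ^ q` is decreasing. -/
structure HasAlmostPowerGrowth (Ψ : ℝ → ℝ) (p q a : ℝ) : Prop where
  one_le : 1 ≤ a
  mono : MonotoneOn Ψ (Set.Ici 0)
  pos : ∀ {t}, 0 < t → 0 < Ψ t
  le_mul_rpow : ∀ {s t}, 0 < s → s ≤ t → Ψ s ≤ a * (Ψ t * (s / t) ^ p)
  le_rpow_mul : ∀ {s t}, 1 ≤ s → 0 < t → Ψ (s * t) ≤ s ^ q * Ψ t

variable {Φ Ψ : ℝ → ℝ} {p q r a K : ℝ}

namespace HasAlmostPowerGrowth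

variable {A T τ : ℝ}

lemma map_le_of_le_mul (h : HasAlmostPowerGrowth Ψ p q a) (hA : 1 ≤ A) (hT : 0 < T) (hτ : 0 ≤ τ)
    (hτA : τ ≤ A * T) : Ψ τ ≤ A ^ q * Ψ T :=
  (h.mono hτ (hτ.trans hτA) hτA).trans (h.le_rpow_mul hA hT)

lemma rpow_mul_rpow_neg_mul_le (h : HasAlmostPowerGrowth Ψ p q a) (hr0 : 0 ≤ r) (hrp : r ≤ p)
    (hA : 1 ≤ A) (hT : 0 < T) (hτ : 0 < τ) (hτA : τ ≤ A * T) :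
    T ^ r * τ ^ (-r) * Ψ τ ≤ (a + A ^ q) * Ψ T := by
  have hΨT := h.pos hT
  have ha := h.one_le
  have hAq : 0 ≤ A ^ q := by positivity
  have hratio : T ^ r * τ ^ (-r) * (τ / T) ^ r = 1 := by
    rw [Real.div_rpow hτ.le hT.le, Real.rpow_neg hτ.le]
    have := Real.rpow_pos_of_pos hT r
    have := Real.rpow_pos_of_pos hτ r
    field_simp
  rcases le_total τ T with hτT | hTτ
  · calc T ^ r * τ ^ (-r) * Ψ τ ≤ T ^ r * τ ^ (-r) * (a * (Ψ T * (τ / T) ^ r)) := by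
          gcongr
          refine (h.le_mul_rpow hτ hτT).trans ?_
          gcongr 2
          exact Real.rpow_le_rpow_of_exponent_ge (div_pos hτ hT) ((div_le_one hT).2 hτT) hrp
      _ = a * Ψ T * (T ^ r * τ ^ (-r) * (τ / T) ^ r) := by ring
      _ ≤ _ := by rw [hratio, mul_one]; nlinarith
  · calc T ^ r * τ ^ (-r) * Ψ τ ≤ 1 * (A ^ q * Ψ T) := by
          have hle : T ^ r * τ ^ (-r) ≤ 1 := by
            rw [← hratio]
            exact le_mul_of_one_le_right (by positivity)
              (Real.one_le_rpow ((one_le_div hT).2 hTτ) hr0)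
          exact mul_le_mul hle (h.map_le_of_le_mul hA hT hτ.le hτA) (h.pos hτ).le zero_le_one
      _ ≤ _ := by nlinarith

end HasAlmostPowerGrowth

lemma exists_level_count {x : ℝ} (hx : 1 / 4 ≤ x) :
    ∃ n : ℕ, x ≤ level n ∧ (∀ k < n, level k < x) ∧ n ≤ Real.logb 2 (4 * x) + 1 := by
  have h4x : 0 < 4 * x := by linarith
  refine ⟨⌈Real.logb 2 (4 * x)⌉₊, ?_, fun k hk => ?_, (Nat.ceil_lt_add_one
    (Real.logb_nonneg one_lt_two (by linarith))).le⟩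
  · rw [level, le_div_iff₀' four_pos, ← Real.rpow_natCast]
    exact (Real.logb_le_iff_le_rpow one_lt_two h4x).1 (Nat.le_ceil _)
  · rw [level, div_lt_iff₀' four_pos, ← Real.rpow_natCast]
    exact (Real.lt_logb_iff_rpow_lt one_lt_two h4x).1 (Nat.lt_ceil.1 hk)

/-- The top scale of the decomposition, relative to `N ^ (1 / r)`: it dominates the norms of all `z`
of unit modular in Lewis' position. -/
noncomputable def topScale (q : ℝ) : ℝ := 4 * 2 ^ q

/-- The constant in the sample size of one sampling step. -/
noncomputable def sampleSizeConst (q a K : ℝ) : ℝ :=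
  32 * K * 2 ^ q * 3 ^ q * (5 + q) *
    (5120 * 2 ^ q * (a + topScale q ^ q) + (5 + q) * topScale q ^ q)

lemma one_le_topScale (hq : 0 ≤ q) : 1 ≤ topScale q := by
  linarith [topScale, Real.one_le_rpow one_le_two hq, show topScale q = 4 * 2 ^ q from rfl]

lemma sampleSizeConst_pos (hq : 0 ≤ q) (ha : 0 ≤ a) (hK : 0 < K) : 0 < sampleSizeConst q a K := by
  have := one_le_topScale hq
  unfold sampleSizeConst
  positivity

lemma level_budget_le (h : HasAlmostPowerGrowth Ψ p q a) (hr1 : 1 ≤ r) (hr2 : r ≤ 2) (hrp : r ≤ p)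
    (hq : 0 ≤ q) (hK : 0 < K) {N ell L T τ : ℝ} (hT : 0 < T) (hTN : T ^ r = N) (hell : 0 ≤ ell)
    (hL : ell ≤ L) {n m : ℕ} (hn : (n : ℝ) ≤ (5 + q) * ell) (hn0 : 0 < n) (hτ : 0 < τ)
    (hτA : τ ≤ topScale q * T) (hm : sampleSizeConst q a K * (Ψ T * ell * L) ≤ m) :
    160 * (2 * 2 ^ q * N * L * (τ / 4) ^ (-r)) + n ≤
      m * ((2 ^ q)⁻¹ / (4 * n)) / (8 * (K * Ψ (3 * τ))) := by
  have hA := one_le_topScale hq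
  have hL0 := hell.trans hL
  have := h.pos hT
  have hΨτ := h.pos hτ
  have hn0' : (0 : ℝ) < n := Nat.cast_pos.2 hn0
  have hsplit : (τ / 4) ^ (-r) ≤ 16 * τ ^ (-r) := by
    rw [Real.div_rpow hτ.le zero_le_four, Real.rpow_neg zero_le_four, div_inv_eq_mul, mul_comm]
    gcongr
    exact (Real.rpow_le_rpow_of_exponent_le (by norm_num) hr2).trans_eq (by norm_num)
  have hentropy : N * τ ^ (-r) * Ψ τ ≤ (a + topScale q ^ q) * Ψ T :=
    hTN ▸ h.rpow_mul_rpow_neg_mul_le (zero_le_one.trans hr1) hrp hA hT hτ hτA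
  have htop : Ψ τ ≤ topScale q ^ q * Ψ T := h.map_le_of_le_mul hA hT hτ.le hτA
  have hN : 0 < N := hTN ▸ Real.rpow_pos_of_pos hT r
  have hβ : 0 < K * Ψ (3 * τ) := mul_pos hK (h.pos (by positivity))
  have hnL : (n : ℝ) ≤ (5 + q) * L := hn.trans (by gcongr)
  rw [le_div_iff₀ (by positivity), ← div_div, ← mul_div_assoc, ← mul_div_assoc,
    le_div_iff₀ hn0', ← div_eq_mul_inv, div_div, le_div_iff₀ (by positivity)]
  calc (160 * (2 * 2 ^ q * N * L * (τ / 4) ^ (-r)) + n) * (8 * (K * Ψ (3 * τ))) * n * (2 ^ q * 4)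
      ≤ (160 * (2 * 2 ^ q * N * L * (16 * τ ^ (-r))) + (5 + q) * L) *
          (8 * (K * (3 ^ q * Ψ τ))) * ((5 + q) * ell) * (2 ^ q * 4) := by
        gcongr
        exact h.le_rpow_mul (by norm_num) hτ
    _ = 32 * K * 2 ^ q * 3 ^ q * (5 + q) * ell * L *
          (5120 * 2 ^ q * (N * τ ^ (-r) * Ψ τ) + (5 + q) * Ψ τ) := by ring
    _ ≤ 32 * K * 2 ^ q * 3 ^ q * (5 + q) * ell * L *
          (5120 * 2 ^ q * ((a + topScale q ^ q) * Ψ T) + (5 + q) * (topScale q ^ q * Ψ T)) := by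
        gcongr
    _ = sampleSizeConst q a K * (Ψ T * ell * L) := by unfold sampleSizeConst; ring
    _ ≤ m := hm

end SampleSize

section Modular

variable {ι : Type*} [Fintype ι] {Φ : ℝ → ℝ} {p q t : ℝ} {w g : ι → ℝ}

lemma modular_nonneg (h : HasPowerGrowth Φ p q) (hw : ∀ i, 0 ≤ w i) : 0 ≤ modular Φ w g :=
  Finset.sum_nonneg fun i _ => mul_nonneg (hw i) (h.nonneg (abs_nonneg _))

lemma mul_modular_le (h : HasPowerGrowth Φ p q) (hw : ∀ i, 0 ≤ w i) (ht : 1 ≤ t) :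
    t * modular Φ w g ≤ modular Φ w (t • g) := by
  rw [modular, Finset.mul_sum]
  refine Finset.sum_le_sum fun i _ => ?_
  rw [mul_left_comm, Pi.smul_apply, smul_eq_mul, abs_mul, abs_of_nonneg (zero_le_one.trans ht)]
  exact mul_le_mul_of_nonneg_left (h.mul_le ht (abs_nonneg _)) (hw i)

lemma modular_smul_le (h : HasPowerGrowth Φ p q) (hw : ∀ i, 0 ≤ w i) (ht : 1 ≤ t) :
    modular Φ w (t • g) ≤ t ^ q * modular Φ w g := by
  rw [modular, modular, Finset.mul_sum]
  refine Finset.sum_le_sum fun i _ => ?_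
  rw [mul_left_comm, Pi.smul_apply, smul_eq_mul, abs_mul, abs_of_nonneg (zero_le_one.trans ht)]
  exact mul_le_mul_of_nonneg_left (h.le_rpow_mul ht (abs_nonneg _)) (hw i)

lemma modular_smul_le_of_le_one (h : HasPowerGrowth Φ p q) (hw : ∀ i, 0 ≤ w i) (ht0 : 0 ≤ t)
    (ht1 : t ≤ 1) : modular Φ w (t • g) ≤ modular Φ w g := by
  refine Finset.sum_le_sum fun i _ =>
    mul_le_mul_of_nonneg_left (h.le_of_le (abs_nonneg _) ?_) (hw i)
  rw [Pi.smul_apply, smul_eq_mul, abs_mul, abs_of_nonneg ht0]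
  exact mul_le_of_le_one_left (abs_nonneg _) ht1

lemma exists_modular_smul_eq_one (h : HasPowerGrowth Φ p q) (hg : 1 ≤ modular Φ w g) :
    ∃ t : ℝ, 0 ≤ t ∧ t ≤ 1 ∧ modular Φ w (t • g) = 1 := by
  have hcont : Continuous fun t : ℝ => modular Φ w (t • g) :=
    continuous_finsetSum _ fun i _ => continuous_const.mul <|
      h.continuous_comp (f := fun t : ℝ => |t * g i|) (by fun_prop) fun t => abs_nonneg _
  obtain ⟨t, ht, ht1⟩ := intermediate_value_Icc (zero_le_one (α := ℝ)) hcont.continuousOn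
    (show (1 : ℝ) ∈ _ from ⟨by simp [modular, h.map_zero], by simpa using hg⟩)
  exact ⟨t, ht.1, ht.2, ht1⟩

end Modular

section OneStep

variable {E : Type*} [NormedAddCommGroup E] [InnerProductSpace ℝ E] [FiniteDimensional ℝ E]
  {ι : Type*} [Fintype ι] {Φ Ψ : ℝ → ℝ} {p q A K : ℝ} {μ : ι → ℝ} {a : ι → E}

lemma inner_adjoint_symm_apply (T : E ≃L[ℝ] E) (z x : E) :
    ⟪ContinuousLinearMap.adjoint (T.symm : E →L[ℝ] E) z, T x⟫ = ⟪z, x⟫ := by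
  rw [ContinuousLinearMap.adjoint_inner_left]
  simp

/-- `log₂ (2 N)`, the logarithmic factor of the sample size. -/
noncomputable def logFactor (N : ℕ) : ℝ := Real.logb 2 (2 * N)

/-- The value `Ψ (N ^ (1 / min p 2))`, the main factor of the sample size. -/
noncomputable def mainFactor (Ψ : ℝ → ℝ) (p : ℝ) (N : ℕ) : ℝ := Ψ ((N : ℝ) ^ (1 / min p 2))

lemma logFactor_eq {N : ℕ} (hN : 1 ≤ N) : logFactor N = 1 + Real.logb 2 N := by
  have : (N : ℝ) ≠ 0 := by positivity
  rw [logFactor, Real.logb_mul two_ne_zero this, Real.logb_self_eq_one one_lt_two]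

lemma one_le_logFactor {N : ℕ} (hN : 1 ≤ N) : 1 ≤ logFactor N := by
  rw [logFactor_eq hN]
  exact le_add_of_nonneg_right (Real.logb_nonneg one_lt_two (Nat.one_le_cast.2 hN))

lemma exists_level_count_of_dim {q r : ℝ} (hq : 0 ≤ q) (hr1 : 1 ≤ r) {N : ℕ} (hN : 1 ≤ N) :
    ∃ n : ℕ, 4 * 2 ^ q * N ≤ level n ^ r ∧
      (∀ k < n, level k < topScale q * (N : ℝ) ^ (1 / r)) ∧ (n : ℝ) ≤ (5 + q) * logFactor N := by
  have hr0 : 0 < r := zero_lt_one.trans_le hr1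
  have hN1 : (1 : ℝ) ≤ N := Nat.one_le_cast.2 hN
  have hT1 : 1 ≤ (N : ℝ) ^ (1 / r) := Real.one_le_rpow hN1 (by positivity)
  have hA := one_le_topScale hq
  obtain ⟨n, hn, hlt, hcount⟩ := exists_level_count (x := topScale q * (N : ℝ) ^ (1 / r))
    (by nlinarith)
  refine ⟨n, ?_, hlt, hcount.trans ?_⟩
  · calc 4 * 2 ^ q * N = topScale q * ((N : ℝ) ^ (1 / r)) ^ r := by
          rw [← Real.rpow_mul (by positivity), one_div_mul_cancel hr0.ne', Real.rpow_one, topScale]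
      _ ≤ topScale q ^ r * ((N : ℝ) ^ (1 / r)) ^ r := by
          gcongr
          exact Real.self_le_rpow_of_one_le hA hr1
      _ = (topScale q * (N : ℝ) ^ (1 / r)) ^ r := by
          rw [Real.mul_rpow (by positivity) (by positivity)]
      _ ≤ level n ^ r := by gcongr
  · have hlogN : 0 ≤ Real.logb 2 N := Real.logb_nonneg one_lt_two hN1
    have hTlog : Real.logb 2 ((N : ℝ) ^ (1 / r)) ≤ Real.logb 2 N := by
      rw [Real.logb_rpow_eq_mul_logb_of_pos (by positivity)]
      exact mul_le_of_le_one_left hlogN ((div_le_one hr0).2 hr1)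
    have hsplit : Real.logb 2 (4 * (topScale q * (N : ℝ) ^ (1 / r))) =
        4 + q + Real.logb 2 ((N : ℝ) ^ (1 / r)) := by
      rw [topScale, ← mul_assoc, ← mul_assoc, show (4 : ℝ) * 4 = 2 ^ (4 : ℝ) by norm_num,
        ← Real.rpow_add two_pos, Real.logb_mul (by positivity) (by positivity),
        Real.logb_rpow two_pos (by norm_num)]
    rw [hsplit, logFactor_eq hN]
    nlinarith

variable [MeasurableSpace E] [BorelSpace E] [Nontrivial E]

lemma exists_sample_of_isGaussianMedianBound (hΦ : HasPowerGrowth Φ p q)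
    (hΨ : HasAlmostPowerGrowth Ψ p q A) (hK : 0 < K)
    (hΦΨ : ∀ {t s}, 0 < t → 0 < s → Φ (t * s) ≤ K * (Φ t * Ψ s)) (hμ : ∀ i, 0 < μ i)
    (hμ1 : ∑ i, μ i = 1) (ha : Submodule.span ℝ (Set.range a) = ⊤) {L : ℝ}
    (hL : logFactor (finrank ℝ E) ≤ L)
    (hgauss : ∀ e : ι → E, (∀ i, ‖e i‖ ≤ 1) → IsGaussianMedianBound e L) {m : ℕ}
    (hm : sampleSizeConst q A K * (mainFactor Ψ p (finrank ℝ E) * logFactor (finrank ℝ E) * L) ≤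
      m) :
    ∃ (s : Fin m → ι) (w : Fin m → ℝ), (∀ j, 0 < w j) ∧ ∑ j, w j = 1 ∧
      ∀ z, 1 ≤ modular Φ μ (fun i => ⟪z, a i⟫) →
        samplingLoss q ≤ modular Φ w fun j => ⟪z, a (s j)⟫ := by
  have hμ0 := fun i => (hμ i).le
  have hq : 0 ≤ q := zero_le_two.trans hΦ.two_le
  have hN : 1 ≤ finrank ℝ E := finrank_pos
  have hell := one_le_logFactor hN
  have hr1 : 1 ≤ min p 2 := le_min hΦ.one_le one_le_two
  have hT : 0 < (finrank ℝ E : ℝ) ^ (1 / min p 2) := by positivity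
  have hTN : ((finrank ℝ E : ℝ) ^ (1 / min p 2)) ^ min p 2 = finrank ℝ E := by
    rw [← Real.rpow_mul (by positivity), one_div_mul_cancel (by positivity), Real.rpow_one]
  obtain ⟨n, hDn, hlevel, hn⟩ := exists_level_count_of_dim hq hr1 hN
  obtain ⟨T, hT1, hframe⟩ := exists_lewis_position hΦ hμ ha
  have hm0 : 0 < m := by
    have := sampleSizeConst_pos hq (zero_le_one.trans hΨ.one_le) hK
    have := hΨ.pos hT
    have hL0 : 0 < L := by linarith
    exact_mod_cast (show (0 : ℝ) < _ by unfold mainFactor; positivity).trans_le hm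
  obtain ⟨s, w, hw, hw1, hs⟩ := exists_sample_of_isUnitFrame (L := L)
    (β := fun k => K * Ψ (3 * level k)) hΦ hμ0 hμ1 hT1 hframe hr1 (min_le_right _ _)
    (min_le_left _ _) (hell.trans hL) (hgauss _ fun i => norm_normalize_le_one _)
    (fun k => mul_pos hK (hΨ.pos (mul_pos three_pos (level_pos k))))
    (fun k i y => (levelPart_le hΦ hΨ.mono (fun hs => (hΨ.pos hs).le) hK.le hΦΨ (level_pos k)
      (norm_nonneg _)).trans_eq (by ring))
    (by linarith) hm0 fun k hk => level_budget_le hΨ hr1 (min_le_right _ _) (min_le_left _ _) hq hK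
      hT hTN (by linarith) hL hn (k.zero_le.trans_lt hk) (level_pos k) (hlevel k hk).le hm
  refine ⟨s, w, hw, hw1, fun z hz => ?_⟩
  obtain ⟨t, ht0, ht1, hone⟩ := exists_modular_smul_eq_one hΦ hz
  have hinner : ∀ x, ⟪ContinuousLinearMap.adjoint (T.symm : E →L[ℝ] E) (t • z), T x⟫ =
      t * ⟪z, x⟫ := fun x => by rw [inner_adjoint_symm_apply, real_inner_smul_left]
  have hle := hs _ ((congrArg (modular Φ μ) (funext fun i => hinner (a i))).trans hone)
  rw [funext fun j => hinner (a (s j))] at hle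
  exact hle.trans (modular_smul_le_of_le_one hΦ (fun j => (hw j).le) ht0 ht1)

end OneStep

section InnerMap

variable {E : Type*} [NormedAddCommGroup E] [InnerProductSpace ℝ E] {ι : Type*} {a : ι → E}

/-- The linear map `z ↦ (⟪z, a i⟫)ᵢ` whose range is a space of functions on the index set. -/
def innerMap (a : ι → E) : E →ₗ[ℝ] ι → ℝ where
  toFun z i := ⟪z, a i⟫
  map_add' z z' := funext fun i => inner_add_left z z' (a i)
  map_smul' t z := funext fun i => real_inner_smul_left z (a i) t

lemma ker_innerMap (a : ι → E) :
    LinearMap.ker (innerMap a) = (Submodule.span ℝ (Set.range a))ᗮ := by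
  ext z
  refine ⟨fun hz => ?_, fun hz => funext fun i =>
    (Submodule.mem_orthogonal' _ z).1 hz _ (Submodule.subset_span ⟨i, rfl⟩)⟩
  have hspan : Submodule.span ℝ (Set.range a) ≤ (ℝ ∙ z)ᗮ :=
    Submodule.span_le.2 <| Set.range_subset_iff.2 fun i =>
      Submodule.mem_orthogonal_singleton_iff_inner_right.2 (congrFun hz i)
  exact (Submodule.mem_orthogonal' _ z).2 fun x hx =>
    Submodule.mem_orthogonal_singleton_iff_inner_right.1 (hspan hx)

lemma span_range_eq_top_iff [FiniteDimensional ℝ E] :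
    Submodule.span ℝ (Set.range a) = ⊤ ↔ LinearMap.ker (innerMap a) = ⊥ := by
  rw [ker_innerMap, Submodule.orthogonal_eq_bot_iff]

variable [FiniteDimensional ℝ E] [Fintype ι] {κ : Type*} [Fintype κ] {Φ : ℝ → ℝ} {p q c : ℝ}
  {μ : ι → ℝ} {s : κ → ι} {w : κ → ℝ}

lemma modular_innerMap_pos (h : HasPowerGrowth Φ p q) (hμ : ∀ i, 0 < μ i)
    (ha : Submodule.span ℝ (Set.range a) = ⊤) {z : E} (hz : z ≠ 0) :
    0 < modular Φ μ (innerMap a z) := by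
  have hne : innerMap a z ≠ 0 := fun h0 =>
    hz ((Submodule.mem_bot ℝ).1 (span_range_eq_top_iff.1 ha ▸ LinearMap.mem_ker.2 h0))
  obtain ⟨i, hi⟩ := Function.ne_iff.1 hne
  exact Finset.sum_pos' (fun i _ => mul_nonneg (hμ i).le (h.nonneg (abs_nonneg _)))
    ⟨i, Finset.mem_univ i, mul_pos (hμ i) (h.pos (abs_pos.2 hi))⟩

lemma span_range_comp_eq_top (h : HasPowerGrowth Φ p q) (hμ : ∀ i, 0 < μ i)
    (ha : Submodule.span ℝ (Set.range a) = ⊤) (hc : 0 < c)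
    (hs : ∀ z, 1 ≤ modular Φ μ (innerMap a z) → c ≤ modular Φ w (innerMap (a ∘ s) z)) :
    Submodule.span ℝ (Set.range (a ∘ s)) = ⊤ := by
  rw [span_range_eq_top_iff, LinearMap.ker_eq_bot']
  intro z hz
  by_contra hz0
  have hpos := modular_innerMap_pos h hμ ha hz0
  set t := max 1 (modular Φ μ (innerMap a z))⁻¹
  have hlarge : 1 ≤ modular Φ μ (innerMap a (t • z)) := by
    rw [map_smul]
    refine le_trans ?_ (mul_modular_le h (fun i => (hμ i).le) (le_max_left _ _))
    rw [← inv_mul_cancel₀ hpos.ne']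
    exact mul_le_mul_of_nonneg_right (le_max_right _ _) hpos.le
  have hvanish : modular Φ w (innerMap (a ∘ s) (t • z)) = 0 := by
    simp [modular, hz, h.map_zero]
  exact absurd (hs _ hlarge) (hvanish ▸ hc.not_ge)

end InnerMap

section TwoSteps

variable {Φ Ψ : ℝ → ℝ} {p q A K : ℝ}

lemma rpow_mul_le_modular_of_forall_one_le {V ι κ : Type*} [AddCommGroup V] [Module ℝ V]
    [Fintype ι] [Fintype κ] (h : HasPowerGrowth Φ p q) {w : ι → ℝ} {w' : κ → ℝ}
    (hw : ∀ i, 0 ≤ w i) (hw' : ∀ j, 0 ≤ w' j) {F : V →ₗ[ℝ] ι → ℝ} {G : V →ₗ[ℝ] κ → ℝ} {c d : ℝ}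
    (hFG : ∀ z, 1 ≤ modular Φ w (F z) → c ≤ modular Φ w' (G z)) (hd0 : 0 < d) (hd1 : d ≤ 1) {z : V}
    (hz : d ≤ modular Φ w (F z)) : d ^ q * c ≤ modular Φ w' (G z) := by
  have hd := (one_le_inv₀ hd0).2 hd1
  have hscaled : 1 ≤ modular Φ w (F (d⁻¹ • z)) := by
    rw [map_smul]
    refine le_trans ?_ (mul_modular_le h hw hd)
    rwa [← div_eq_inv_mul, one_le_div hd0]
  have hle := hFG _ hscaled
  rw [map_smul] at hle
  have hlast := hle.trans (modular_smul_le h hw' hd)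
  rwa [Real.inv_rpow hd0.le, ← div_eq_inv_mul, le_div_iff₀' (Real.rpow_pos_of_pos hd0 q)] at hlast

/-- An upper bound of `2 log (4 m) / log₂ (2 N)`, where `m` is the size of the first sample. -/
noncomputable def logSizeConst (Ψ : ℝ → ℝ) (q A K : ℝ) : ℝ :=
  2 * (Real.log (4 * (16 * sampleSizeConst q A K * Ψ 1 + 1)) + (q + 3))

/-- The constant in the size of the final sample. -/
noncomputable def sampleCountConst (Ψ : ℝ → ℝ) (q A K : ℝ) : ℝ :=
  sampleSizeConst q A K * logSizeConst Ψ q A K + (Ψ 1)⁻¹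

lemma one_le_logSizeConst (hq : 0 ≤ q) (hC : 0 ≤ sampleSizeConst q A K) (hΨ : 0 ≤ Ψ 1) :
    1 ≤ logSizeConst Ψ q A K := by
  have hlog : 0 ≤ Real.log (4 * (16 * sampleSizeConst q A K * Ψ 1 + 1)) :=
    Real.log_nonneg (by nlinarith [mul_nonneg hC hΨ])
  unfold logSizeConst
  linarith

lemma sampleCountConst_pos (hΨ : HasAlmostPowerGrowth Ψ p q A) (hq : 0 ≤ q) (hK : 0 < K) :
    0 < sampleCountConst Ψ q A K := by
  have hC := sampleSizeConst_pos hq (zero_le_one.trans hΨ.one_le) hK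
  have hΨ1 := hΨ.pos one_pos
  have hlog := one_le_logSizeConst hq hC.le hΨ1.le
  unfold sampleCountConst
  positivity

lemma logFactor_le_two_mul {N : ℕ} (hN : 1 ≤ N) : logFactor N ≤ 2 * N := by
  have hN1 : (1 : ℝ) ≤ N := Nat.one_le_cast.2 hN
  have hlog : Real.logb 2 N ≤ N := by
    rw [Real.logb_le_iff_le_rpow one_lt_two (by linarith), Real.rpow_natCast]
    exact_mod_cast Nat.lt_two_pow_self.le
  rw [logFactor_eq hN]
  linarith

lemma log_le_logb_two {x : ℝ} (hx : 1 ≤ x) : Real.log x ≤ Real.logb 2 x := by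
  rw [← Real.log_div_log, le_div_iff₀ (Real.log_pos one_lt_two)]
  exact mul_le_of_le_one_right (Real.log_nonneg hx) (by linarith [Real.log_two_lt_d9])

lemma mul_two_log_le {N : ℕ} (hN : 1 ≤ N) :
    N * (2 * Real.log (4 * N)) ≤ 4 * N * logFactor N := by
  have hN1 : (1 : ℝ) ≤ N := Nat.one_le_cast.2 hN
  have hlog := log_le_logb_two (x := 4 * N) (by linarith)
  have hsplit : Real.logb 2 (4 * N) = 1 + logFactor N := by
    rw [logFactor, show (4 : ℝ) * N = 2 * (2 * N) by ring,
      Real.logb_mul two_ne_zero (by positivity), Real.logb_self_eq_one one_lt_two]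
  nlinarith [one_le_logFactor hN]

section MainFactor

variable {N : ℕ}

lemma map_one_le_mainFactor (hΨ : HasAlmostPowerGrowth Ψ p q A) (hp : 1 ≤ p) (hN : 1 ≤ N) :
    Ψ 1 ≤ mainFactor Ψ p N :=
  have : 1 ≤ (N : ℝ) ^ (1 / min p 2) :=
    Real.one_le_rpow (Nat.one_le_cast.2 hN) (by positivity)
  hΨ.mono (Set.mem_Ici.2 zero_le_one) (Set.mem_Ici.2 (zero_le_one.trans this)) this

lemma mainFactor_le (hΨ : HasAlmostPowerGrowth Ψ p q A) (hp : 1 ≤ p) (hN : 1 ≤ N) :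
    mainFactor Ψ p N ≤ (N : ℝ) ^ q * Ψ 1 := by
  have hN1 : (1 : ℝ) ≤ N := Nat.one_le_cast.2 hN
  have hle : (N : ℝ) ^ (1 / min p 2) ≤ N := by
    refine (Real.rpow_le_rpow_of_exponent_le hN1 ?_).trans_eq (Real.rpow_one _)
    exact (div_le_one (by positivity)).2 (le_min hp one_le_two)
  exact hΨ.map_le_of_le_mul hN1 one_pos (by positivity) (by rwa [mul_one])

lemma two_mul_log_ceil_le (hΨ : HasAlmostPowerGrowth Ψ p q A) (hp : 1 ≤ p) (hq : 0 ≤ q)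
    (hK : 0 < K) (hN : 1 ≤ N) :
    2 * Real.log (4 * (⌈sampleSizeConst q A K * (mainFactor Ψ p N * logFactor N *
      (4 * N * logFactor N))⌉₊ : ℕ)) ≤ logSizeConst Ψ q A K * logFactor N := by
  set C := sampleSizeConst q A K
  set m := ⌈C * (mainFactor Ψ p N * logFactor N * (4 * N * logFactor N))⌉₊
  have hC0 : 0 < C := sampleSizeConst_pos hq (zero_le_one.trans hΨ.one_le) hK
  have hΨ1 := hΨ.pos one_pos
  have hN1 : (1 : ℝ) ≤ N := Nat.one_le_cast.2 hN
  have hell := one_le_logFactor hN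
  have hM := hΨ1.trans_le (map_one_le_mainFactor hΨ hp hN)
  have hpow : (N : ℝ) ^ (q + 3) = (N : ℝ) ^ q * N ^ 3 := by
    rw [Real.rpow_add (by positivity)]
    norm_cast
  have : (0 : ℝ) < m := Nat.cast_pos.2 (Nat.ceil_pos.2 (by positivity))
  have hsize : 4 * (m : ℝ) ≤ 4 * (16 * C * Ψ 1 + 1) * (N : ℝ) ^ (q + 3) := by
    have hprod : C * (mainFactor Ψ p N * logFactor N * (4 * N * logFactor N)) ≤
        C * ((N : ℝ) ^ q * Ψ 1 * (2 * N) * (4 * N * (2 * N))) := by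
      gcongr
      exacts [mainFactor_le hΨ hp hN, logFactor_le_two_mul hN, logFactor_le_two_mul hN]
    have hone : 1 ≤ (N : ℝ) ^ (q + 3) := Real.one_le_rpow hN1 (by linarith)
    have hceil := (Nat.ceil_lt_add_one (a := C * (mainFactor Ψ p N * logFactor N *
      (4 * N * logFactor N))) (by positivity)).le
    rw [hpow] at hone ⊢
    linarith
  calc 2 * Real.log (4 * m)
      ≤ 2 * Real.log (4 * (16 * C * Ψ 1 + 1) * (N : ℝ) ^ (q + 3)) := by gcongr
    _ = 2 * (Real.log (4 * (16 * C * Ψ 1 + 1)) + (q + 3) * Real.log N) := by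
        rw [Real.log_mul (by positivity) (by positivity), Real.log_rpow (by positivity)]
    _ ≤ 2 * (Real.log (4 * (16 * C * Ψ 1 + 1)) * logFactor N + (q + 3) * logFactor N) := by
        have hlog : 0 ≤ Real.log (4 * (16 * C * Ψ 1 + 1)) :=
          Real.log_nonneg (by nlinarith [mul_pos hC0 hΨ1])
        have hNlog : Real.log N ≤ logFactor N := by
          rw [logFactor_eq hN]
          linarith [log_le_logb_two hN1]
        gcongr
        exact le_mul_of_one_le_right hlog hell
    _ = _ := by unfold logSizeConst; ring

lemma ceil_le_sampleCountConst_mul (hΨ : HasAlmostPowerGrowth Ψ p q A) (hp : 1 ≤ p) (hq : 0 ≤ q)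
    (hK : 0 < K) (hN : 1 ≤ N) :
    (⌈sampleSizeConst q A K * (mainFactor Ψ p N * logFactor N *
      (logSizeConst Ψ q A K * logFactor N))⌉₊ : ℝ) ≤
        sampleCountConst Ψ q A K * mainFactor Ψ p N * logFactor N ^ 2 := by
  have hC0 := sampleSizeConst_pos hq (zero_le_one.trans hΨ.one_le) hK
  have hΨ1 := hΨ.pos one_pos
  have hlog := one_le_logSizeConst hq hC0.le hΨ1.le
  have hell := one_le_logFactor hN
  have hM := map_one_le_mainFactor hΨ hp hN
  have hM0 := hΨ1.trans_le hM
  have hone : 1 ≤ (Ψ 1)⁻¹ * mainFactor Ψ p N * logFactor N ^ 2 := by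
    rw [← div_eq_inv_mul]
    exact one_le_mul_of_one_le_of_one_le ((one_le_div hΨ1).2 hM) (one_le_pow₀ hell)
  refine (Nat.ceil_lt_add_one (by positivity)).le.trans ?_
  unfold sampleCountConst
  linarith

end MainFactor

variable {E : Type*} [NormedAddCommGroup E] [InnerProductSpace ℝ E] [FiniteDimensional ℝ E]
  [Nontrivial E] {ι : Type*} [Fintype ι] {a : ι → E}

/-- The dimension alone gives a first sample of size polynomial in `N`; then a maximal inequality
over the sample gives an entropy bound with `L` of order `log N`. -/
lemma exists_sample_of_span_eq_top (hΦ : HasPowerGrowth Φ p q) (hΨ : HasAlmostPowerGrowth Ψ p q A)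
    (hK : 0 < K) (hΦΨ : ∀ {t s}, 0 < t → 0 < s → Φ (t * s) ≤ K * (Φ t * Ψ s)) {μ : ι → ℝ}
    (hμ : ∀ i, 0 < μ i) (hμ1 : ∑ i, μ i = 1) (ha : Submodule.span ℝ (Set.range a) = ⊤) :
    ∃ (m : ℕ) (s : Fin m → ι) (w : Fin m → ℝ),
      m ≤ sampleCountConst Ψ q A K * mainFactor Ψ p (finrank ℝ E) * logFactor (finrank ℝ E) ^ 2 ∧
      (∀ j, 0 < w j) ∧ ∑ j, w j = 1 ∧ ∀ z, 1 ≤ modular Φ μ (innerMap a z) →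
        samplingLoss q ^ q * samplingLoss q ≤ modular Φ w (innerMap (a ∘ s) z) := by
  borelize E
  set N := finrank ℝ E
  have hN : 1 ≤ N := finrank_pos
  have hN1 : (1 : ℝ) ≤ N := Nat.one_le_cast.2 hN
  have hq : 0 ≤ q := zero_le_two.trans hΦ.two_le
  have hell := one_le_logFactor hN
  obtain ⟨s₁, w₁, hw₁, hw₁_sum, hs₁⟩ := exists_sample_of_isGaussianMedianBound hΦ hΨ hK hΦΨ hμ hμ1
    ha (L := 4 * N * logFactor N) (by nlinarith)
    (fun e he => isGaussianMedianBound_of_finrank_mul_log_le he (mul_two_log_le hN)) (Nat.le_ceil _)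
  have hloss1 : samplingLoss q ≤ 1 :=
    inv_le_one_of_one_le₀ (by nlinarith [one_le_pow₀ hΦ.one_le_two_rpow (n := 2)])
  have hne : Nonempty (Fin _) := Finset.univ_nonempty_iff.1 <|
    Finset.nonempty_of_sum_ne_zero (hw₁_sum.trans_ne one_ne_zero)
  have hlogSize := one_le_logSizeConst hq
    (sampleSizeConst_pos hq (zero_le_one.trans hΨ.one_le) hK).le (hΨ.pos one_pos).le
  obtain ⟨s₂, w₂, hw₂, hw₂_sum, hs₂⟩ := exists_sample_of_isGaussianMedianBound hΦ hΨ hK hΦΨ hw₁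
    hw₁_sum (span_range_comp_eq_top hΦ hμ ha (samplingLoss_pos q) hs₁)
    (L := logSizeConst Ψ q A K * logFactor N) (le_mul_of_one_le_left (by linarith) hlogSize)
    (fun e he => isGaussianMedianBound_of_log_card_le he (by
      rw [Fintype.card_fin]; exact two_mul_log_ceil_le hΨ hΦ.one_le hq hK hN)) (Nat.le_ceil _)
  exact ⟨_, s₁ ∘ s₂, w₂, ceil_le_sampleCountConst_mul hΨ hΦ.one_le hq hK hN, hw₂, hw₂_sum,
    fun z hz => rpow_mul_le_modular_of_forall_one_le hΦ (fun i => (hw₁ i).le)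
      (fun j => (hw₂ j).le) (F := innerMap (a ∘ s₁))
      (G := innerMap (a ∘ s₁ ∘ s₂)) hs₂ (samplingLoss_pos q) hloss1 (hs₁ z hz)⟩

end TwoSteps

section Discretization

universe u

variable {Ω : Type*} [MeasurableSpace Ω] {μ : Measure Ω} [IsProbabilityMeasure μ]

lemma exists_convex_combination_norm_integral_sub_lt {V : Type u} [NormedAddCommGroup V]
    [NormedSpace ℝ V] [CompleteSpace V] {F : Ω → V} (hF : Integrable F μ) {ε : ℝ} (hε : 0 < ε) :
    ∃ (ι : Type u) (_ : Fintype ι) (x : ι → Ω) (w : ι → ℝ), (∀ i, 0 < w i) ∧ ∑ i, w i = 1 ∧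
      ‖∫ y, F y ∂μ - ∑ i, w i • F (x i)‖ < ε := by
  have hmem : ∫ y, F y ∂μ ∈ closure (convexHull ℝ (Set.range F)) :=
    (convex_convexHull ℝ _).closure.integral_mem isClosed_closure
      (.of_forall fun y => subset_closure (subset_convexHull ℝ _ ⟨y, rfl⟩)) hF
  obtain ⟨g, hg, hdist⟩ := Metric.mem_closure_iff.1 hmem ε hε
  obtain ⟨ι, _, f, w, hf, -, hw, hw1, rfl⟩ := eq_pos_convex_span_of_mem_convexHull hg
  choose x hx using Set.range_subset_iff.1 hf
  exact ⟨ι, inferInstance, x, w, hw, hw1, by simpa only [hx, ← dist_eq_norm] using hdist⟩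

variable {E : Type u} [NormedAddCommGroup E] [InnerProductSpace ℝ E] [FiniteDimensional ℝ E]
  {Φ : ℝ → ℝ} {p q : ℝ}

lemma exists_innerMap_eq {α : Type*} (L : E →ₗ[ℝ] α → ℝ) : ∃ v : α → E, innerMap v = L :=
  ⟨fun y => (InnerProductSpace.toDual ℝ E).symm
    (LinearMap.toContinuousLinearMap (LinearMap.proj y ∘ₗ L)),
    LinearMap.ext fun z => funext fun y => by
      exact (real_inner_comm _ _).trans (InnerProductSpace.toDual_symm_apply ..)⟩

lemma exists_mul_norm_le_modular {ι : Type*} [Fintype ι] (h : HasPowerGrowth Φ p q) {w : ι → ℝ}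
    (hw : ∀ i, 0 < w i) {a : ι → E} (ha : Submodule.span ℝ (Set.range a) = ⊤) [Nontrivial E] :
    ∃ c : ℝ, 0 < c ∧ ∀ z, 1 ≤ ‖z‖ → c * ‖z‖ ≤ modular Φ w (innerMap a z) := by
  have hcont : Continuous fun z : E => modular Φ w (innerMap a z) :=
    continuous_finsetSum _ fun i _ => continuous_const.mul <|
      h.continuous_comp (f := fun z => |⟪z, a i⟫|) (by fun_prop) fun _ => abs_nonneg _
  obtain ⟨z₀, hz₀, hmin⟩ := (isCompact_sphere (0 : E) 1).exists_isMinOn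
    (NormedSpace.sphere_nonempty.2 zero_le_one) hcont.continuousOn
  refine ⟨_, modular_innerMap_pos h hw ha (ne_zero_of_mem_unit_sphere ⟨z₀, hz₀⟩), fun z hz => ?_⟩
  have hz0 : z ≠ 0 := norm_pos_iff.1 (zero_lt_one.trans_le hz)
  have hunit : ‖z‖⁻¹ • z ∈ Metric.sphere (0 : E) 1 := by simp [norm_smul, hz0]
  calc modular Φ w (innerMap a z₀) * ‖z‖
      ≤ ‖z‖ * modular Φ w (innerMap a (‖z‖⁻¹ • z)) := by
        rw [mul_comm]
        exact mul_le_mul_of_nonneg_left (hmin hunit) (norm_nonneg z)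
    _ ≤ modular Φ w (‖z‖ • innerMap a (‖z‖⁻¹ • z)) := mul_modular_le h (fun i => (hw i).le) hz
    _ = modular Φ w (innerMap a z) := by
        rw [← map_smul, smul_inv_smul₀ (norm_ne_zero_iff.2 hz0)]

lemma exists_fin_span_eq_top {α : Type*} {v : α → E} (hv : Submodule.span ℝ (Set.range v) = ⊤) :
    ∃ (k : ℕ) (y : Fin k → α), Submodule.span ℝ (Set.range (v ∘ y)) = ⊤ := by
  obtain ⟨b, hb, hspan, -⟩ := Submodule.exists_fun_fin_finrank_span_eq ℝ (Set.range v)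
  choose y hy using hb
  exact ⟨_, y, by rw [show v ∘ y = b from funext hy, hspan, hv]⟩

lemma isBounded_range_of_inner {α : Type*} {v : α → E}
    (hv : ∀ z, ∃ M : ℝ, ∀ y, |⟪z, v y⟫| ≤ M) : Bornology.IsBounded (Set.range v) := by
  choose M hM using hv
  refine isBounded_iff_forall_norm_le.2 ⟨∑ k, M (stdOrthonormalBasis ℝ E k), ?_⟩
  rintro _ ⟨y, rfl⟩
  rw [← (stdOrthonormalBasis ℝ E).sum_repr' (v y)]
  refine norm_sum_le_of_le _ fun k _ => ?_
  rw [norm_smul, OrthonormalBasis.norm_eq_one, mul_one]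
  exact hM _ y

variable [MeasurableSpace E] [BorelSpace E] {v : Ω → E}

lemma exists_integral_le_modular_add (h : HasPowerGrowth Φ p q) (hv : Measurable v)
    (hvb : Bornology.IsBounded (Set.range v)) (ρ : ℝ) :
    ∃ (ι : Type u) (_ : Fintype ι) (x : ι → Ω) (w : ι → ℝ), (∀ i, 0 < w i) ∧ ∑ i, w i = 1 ∧
      ∀ z, ‖z‖ ≤ ρ → ∫ y, Φ |⟪z, v y⟫| ∂μ ≤ modular Φ w (innerMap (v ∘ x) z) + 1 / 2 := by
  let F : C(E, C(Metric.closedBall (0 : E) ρ, ℝ)) := ContinuousMap.curry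
    ⟨fun a => Φ |⟪(a.2 : E), a.1⟫|, h.continuous_comp (by fun_prop) fun _ => abs_nonneg _⟩
  obtain ⟨r, hr⟩ := (hvb.isCompact_closure.image F.continuous).isBounded.exists_norm_le
  have hF : Integrable (fun y => F (v y)) μ :=
    .of_bound (F.continuous.comp_aestronglyMeasurable hv.aestronglyMeasurable) r
      (.of_forall fun y => hr _ ⟨v y, subset_closure ⟨y, rfl⟩, rfl⟩)
  obtain ⟨ι, _, x, w, hw, hw1, hlt⟩ :=
    exists_convex_combination_norm_integral_sub_lt hF one_half_pos
  refine ⟨ι, inferInstance, x, w, hw, hw1, fun z hz => ?_⟩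
  let z' : Metric.closedBall (0 : E) ρ := ⟨z, mem_closedBall_zero_iff.2 hz⟩
  have heval : ∫ y, Φ |⟪z, v y⟫| ∂μ = (∫ y, F (v y) ∂μ) z' :=
    (ContinuousMap.evalCLM ℝ z').integral_comp_comm hF
  have hsum : (∑ i, w i • F (v (x i))) z' = modular Φ w (innerMap (v ∘ x) z) := by
    simp only [ContinuousMap.sum_apply]
    rfl
  have hpoint := (ContinuousMap.norm_coe_le_norm _ z').trans hlt.le
  rw [ContinuousMap.sub_apply, hsum, ← heval] at hpoint
  linarith [(abs_le.1 hpoint).2]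

lemma exists_discretization [Nontrivial E] (h : HasPowerGrowth Φ p q) (hv : Measurable v)
    (hvb : Bornology.IsBounded (Set.range v)) (hspan : Submodule.span ℝ (Set.range v) = ⊤) :
    ∃ (ι : Type u) (_ : Fintype ι) (x : ι → Ω) (w : ι → ℝ), (∀ i, 0 < w i) ∧ ∑ i, w i = 1 ∧
      Submodule.span ℝ (Set.range (v ∘ x)) = ⊤ ∧
      ∀ z, 1 ≤ ∫ y, Φ |⟪z, v y⟫| ∂μ → 1 / 4 ≤ modular Φ w (innerMap (v ∘ x) z) := by
  obtain ⟨k, y, hy⟩ := exists_fin_span_eq_top hspan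
  have hk : 0 < k := Nat.pos_of_ne_zero fun hk => by
    subst hk
    simp [Set.range_eq_empty, bot_ne_top] at hy
  obtain ⟨c, hc, hlarge⟩ := exists_mul_norm_le_modular h (w := fun _ => (2 * k : ℝ)⁻¹)
    (fun _ => by positivity) hy
  obtain ⟨ι, _, x, w, hw, hw1, hsmall⟩ := exists_integral_le_modular_add (μ := μ) h hv hvb
    (max 1 c⁻¹)
  refine ⟨ι ⊕ Fin k, inferInstance, Sum.elim x y,
    Sum.elim (fun i => w i / 2) fun _ => (2 * k)⁻¹, ?_, ?_, ?_, fun z hz => ?_⟩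
  · rintro (i | j)
    exacts [half_pos (hw i), by simp only [Sum.elim_inr]; positivity]
  · simp only [Fintype.sum_sum_type, Sum.elim_inl, Sum.elim_inr, ← Finset.sum_div, hw1,
      Finset.sum_const, Finset.card_univ, Fintype.card_fin, nsmul_eq_mul]
    field_simp
    norm_num
  · refine top_le_iff.1 (hy.symm.trans_le (Submodule.span_mono ?_))
    rintro _ ⟨j, rfl⟩
    exact ⟨Sum.inr j, rfl⟩
  · have hsplit : modular Φ (Sum.elim (fun i => w i / 2) fun _ : Fin k => (2 * k : ℝ)⁻¹)
        (innerMap (v ∘ Sum.elim x y) z) = modular Φ w (innerMap (v ∘ x) z) / 2 +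
          modular Φ (fun _ => (2 * k : ℝ)⁻¹) (innerMap (v ∘ y) z) := by
      simp only [modular, Fintype.sum_sum_type, Finset.sum_div, ← div_mul_eq_mul_div]
      rfl
    rw [hsplit]
    rcases le_total ‖z‖ (max 1 c⁻¹) with hzρ | hzρ
    · have hnonneg : 0 ≤ modular Φ (fun _ => (2 * k : ℝ)⁻¹) (innerMap (v ∘ y) z) :=
        modular_nonneg h fun _ => by positivity
      linarith [hsmall z hzρ]
    · have hone : 1 ≤ c * ‖z‖ := by
        rw [← div_le_iff₀' hc, one_div]
        exact (le_max_right _ _).trans hzρ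
      have hnonneg : 0 ≤ modular Φ w (innerMap (v ∘ x) z) := modular_nonneg h fun i => (hw i).le
      linarith [hlarge z ((le_max_left _ _).trans hzρ)]

lemma measurable_of_inner (hv : ∀ z, Measurable fun y => ⟪z, v y⟫) : Measurable v := by
  have hsum : v = fun y => ∑ k, ⟪stdOrthonormalBasis ℝ E k, v y⟫ • stdOrthonormalBasis ℝ E k :=
    funext fun y => ((stdOrthonormalBasis ℝ E).sum_repr' (v y)).symm
  rw [hsum]
  exact Finset.measurable_fun_sum _ fun k _ => (hv _).smul_const _

end Discretization

section Domination

variable {Φ Ψ : ℝ → ℝ} {p q A K : ℝ}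

lemma exists_range_innerMap_eq {α : Type*} (X : Submodule ℝ (α → ℝ)) [FiniteDimensional ℝ X] :
    ∃ v : α → EuclideanSpace ℝ (Fin (finrank ℝ X)), LinearMap.range (innerMap v) = X ∧
      Submodule.span ℝ (Set.range v) = ⊤ := by
  let e : EuclideanSpace ℝ (Fin (finrank ℝ X)) ≃ₗ[ℝ] X :=
    LinearEquiv.ofFinrankEq _ _ (by simp)
  obtain ⟨v, hv⟩ := exists_innerMap_eq (X.subtype ∘ₗ e.toLinearMap)
  refine ⟨v, ?_, span_range_eq_top_iff.2 ?_⟩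
  · rw [hv, LinearEquiv.range_comp, Submodule.range_subtype]
  · rw [hv, LinearMap.ker_eq_bot]
    exact X.subtype_injective.comp e.injective

/-- The total factor by which discretisation and two sampling steps may decrease a modular. -/
noncomputable def totalLoss (q : ℝ) : ℝ :=
  (1 / 4) ^ q * (samplingLoss q ^ q * samplingLoss q)

lemma totalLoss_pos (q : ℝ) : 0 < totalLoss q := by
  have := samplingLoss_pos q
  unfold totalLoss
  positivity

lemma exists_sample_of_submodule (hΦ : HasPowerGrowth Φ p q) (hΨ : HasAlmostPowerGrowth Ψ p q A)
    (hK : 0 < K) (hΦΨ : ∀ {t s}, 0 < t → 0 < s → Φ (t * s) ≤ K * (Φ t * Ψ s)) {Ω : Type*}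
    [MeasurableSpace Ω] (μ : Measure Ω) [IsProbabilityMeasure μ] (X : Submodule ℝ (Ω → ℝ))
    (hX : ∀ f ∈ X, Measurable f) (hXb : ∀ f ∈ X, ∃ M : ℝ, ∀ y, |f y| ≤ M)
    (hN : 0 < finrank ℝ X) :
    ∃ (m : ℕ) (x : Fin m → Ω) (w : Fin m → ℝ),
      m ≤ sampleCountConst Ψ q A K * mainFactor Ψ p (finrank ℝ X) * logFactor (finrank ℝ X) ^ 2 ∧
      (∀ j, 0 < w j) ∧ ∑ j, w j = 1 ∧
      ∀ f ∈ X, 1 ≤ ∫ y, Φ |f y| ∂μ → totalLoss q ≤ modular Φ w (f ∘ x) := by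
  have : FiniteDimensional ℝ X := Module.finite_of_finrank_pos hN
  obtain ⟨v, hXv, hspan⟩ := exists_range_innerMap_eq X
  have hvX : ∀ z, innerMap v z ∈ X := fun z => hXv.le (LinearMap.mem_range_self _ z)
  have : Nontrivial (EuclideanSpace ℝ (Fin (finrank ℝ X))) :=
    Module.nontrivial_of_finrank_pos (R := ℝ) (by rwa [finrank_euclideanSpace_fin])
  obtain ⟨ι, _, y, w₁, hw₁, hw₁_sum, hy, hdisc⟩ := exists_discretization (μ := μ) hΦ
    (measurable_of_inner fun z => hX _ (hvX z))
    (isBounded_range_of_inner fun z => hXb _ (hvX z)) hspan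
  obtain ⟨m, s, w, hm, hw, hw_sum, hs⟩ :=
    exists_sample_of_span_eq_top hΦ hΨ hK hΦΨ hw₁ hw₁_sum hy
  rw [finrank_euclideanSpace_fin] at hm
  refine ⟨m, y ∘ s, w, hm, hw, hw_sum, fun f hf hint => ?_⟩
  obtain ⟨z, rfl⟩ : f ∈ LinearMap.range (innerMap v) := hXv.ge hf
  exact rpow_mul_le_modular_of_forall_one_le hΦ (fun i => (hw₁ i).le) (fun j => (hw j).le)
    hs (by norm_num) (by norm_num) (hdisc z hint)

end Domination

section PhiFunction

variable {Φ Ψ : ℝ → ℝ} {p q q₀ a s t : ℝ}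

lemma div_rpow_mul_mul_rpow (hs : 0 ≤ s) (ht : 0 < t) (b : ℝ) :
    b / t ^ p * (s * t) ^ p = s ^ p * b := by
  rw [Real.mul_rpow hs ht.le, mul_left_comm, div_mul_cancel₀ _ (Real.rpow_pos_of_pos ht p).ne']

lemma map_mul_le_of_decQ (hΦ : IsPhiPrefun Φ) (hdec : DecQ Φ q₀) (hq : q₀ ≤ q) (hs : 1 ≤ s)
    (ht : 0 < t) : Φ (s * t) ≤ s ^ q * Φ t := by
  rcases hs.eq_or_lt with rfl | hs1
  · simp
  have hs0 : 0 < s := zero_lt_one.trans hs1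
  have hle := hdec t (s * t) ht (lt_mul_of_one_lt_left ht hs1)
  rw [div_le_iff₀ (by positivity), div_rpow_mul_mul_rpow hs0.le ht] at hle
  exact hle.trans (mul_le_mul_of_nonneg_right (Real.rpow_le_rpow_of_exponent_le hs hq)
    (hΦ.nonneg t ht.le))

lemma rpow_mul_le_of_incP (hinc : IncP Φ p) (hs : 1 ≤ s) (ht : 0 < t) :
    s ^ p * Φ t ≤ Φ (s * t) := by
  rcases hs.eq_or_lt with rfl | hs1
  · simp
  have hs0 : 0 < s := zero_lt_one.trans hs1
  have hle := hinc t (s * t) ht (lt_mul_of_one_lt_left ht hs1)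
  rwa [le_div_iff₀ (by positivity), div_rpow_mul_mul_rpow hs0.le ht] at hle

lemma pos_of_decQ (hΦ : IsPhiPrefun Φ) (hdec : DecQ Φ q) (ht : 0 < t) : 0 < Φ t := by
  obtain ⟨u, hu1, hut⟩ := ((hΦ.tendsto_atTop.eventually_ge_atTop 1).and
    (Filter.eventually_ge_atTop t)).exists
  have hle := map_mul_le_of_decQ hΦ hdec le_rfl ((one_le_div ht).2 hut) ht
  rw [div_mul_cancel₀ _ ht.ne'] at hle
  exact pos_of_mul_pos_right (zero_lt_one.trans_le (hu1.trans hle))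
    (Real.rpow_nonneg (div_nonneg (ht.le.trans hut) ht.le) q)

lemma hasPowerGrowth_of_incP_of_decQ (hp : 1 ≤ p) (hq2 : 2 ≤ q) (hΦ : IsPhiPrefun Φ)
    (hinc : IncP Φ p) (hdec : DecQ Φ q₀) (hq : q₀ ≤ q) : HasPowerGrowth Φ p q where
  one_le := hp
  two_le := hq2
  mono := hΦ.mono
  map_zero := hΦ.map_zero
  pos := pos_of_decQ hΦ hdec
  rpow_mul_le hs ht := ht.eq_or_lt.elim (fun h0 => by simp [← h0, hΦ.map_zero])
    (rpow_mul_le_of_incP hinc hs)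
  le_rpow_mul hs ht := ht.eq_or_lt.elim (fun h0 => by simp [← h0, hΦ.map_zero])
    (map_mul_le_of_decQ hΦ hdec hq hs)

lemma hasAlmostPowerGrowth_of_aIncP_of_decQ (hΨ : IsPhiPrefun Ψ) (hinc : AIncP Ψ p a)
    (hdec : DecQ Ψ q₀) (hq : q₀ ≤ q) : HasAlmostPowerGrowth Ψ p q (max a 1) where
  one_le := le_max_right _ _
  mono := hΨ.mono
  pos := pos_of_decQ hΨ hdec
  le_mul_rpow {s t} hs hst := by
    have ht := hs.trans_le hst
    have hΨt := pos_of_decQ hΨ hdec ht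
    rcases hst.eq_or_lt with rfl | hlt
    · simp [hs.ne', le_mul_of_one_le_left hΨt.le (le_max_right a 1)]
    have hle := hinc s t hs hlt
    rw [div_le_iff₀ (by positivity)] at hle
    calc Ψ s ≤ a * (Ψ t / t ^ p) * s ^ p := hle
      _ = a * (Ψ t * (s / t) ^ p) := by rw [Real.div_rpow hs.le ht.le]; ring
      _ ≤ max a 1 * (Ψ t * (s / t) ^ p) := by gcongr; exact le_max_left _ _
  le_rpow_mul := map_mul_le_of_decQ hΨ hdec hq

end PhiFunction

section Luxemburg

variable {Φ Ψ : ℝ → ℝ} {p q B c C : ℝ} {Ω : Type*} {m : ℕ} {x : Fin m → Ω} {w : Fin m → ℝ}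

lemma exists_sum_map_div_le_one (hΨ : IsPhiPrefun Ψ) (w g : Fin m → ℝ) :
    ∃ t : ℝ, 0 < t ∧ ∑ j, w j * Ψ (|g j| / t) ≤ 1 := by
  have hcont : Filter.Tendsto Ψ (nhdsWithin 0 (Set.Ici 0)) (nhds 0) := by
    have hIoi : ContinuousWithinAt Ψ (Set.Ioi 0) 0 := by
      rw [ContinuousWithinAt, hΨ.map_zero]
      exact hΨ.tendsto_zero
    have hIci := continuousWithinAt_Ioi_iff_Ici.1 hIoi
    rwa [ContinuousWithinAt, hΨ.map_zero] at hIci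
  have hterm (j) : Filter.Tendsto (fun t => w j * Ψ (|g j| / t)) Filter.atTop (nhds 0) := by
    refine mul_zero (w j) ▸ (hcont.comp (tendsto_nhdsWithin_iff.2
      ⟨tendsto_const_nhds.div_atTop Filter.tendsto_id, ?_⟩)).const_mul (w j)
    filter_upwards [Filter.eventually_ge_atTop 0] with t ht
    exact div_nonneg (abs_nonneg _) ht
  have hsum : Filter.Tendsto (fun t => ∑ j, w j * Ψ (|g j| / t)) Filter.atTop (nhds 0) := by
    simpa using tendsto_finsetSum Finset.univ fun j _ => hterm j
  exact ((Filter.eventually_gt_atTop 0).and (hsum.eventually_le_const one_pos)).exists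

lemma wDiscLuxNorm_nonneg (Ψ : ℝ → ℝ) (x : Fin m → Ω) (w : Fin m → ℝ) (f : Ω → ℝ) :
    0 ≤ wDiscLuxNorm Ψ x w f :=
  Real.sInf_nonneg fun _ ht => ht.1.le

lemma one_le_MOf_rpow (hp : 0 ≤ p) (t : ℝ) : 1 ≤ MOf Φ Ψ t ^ (1 / p) :=
  Real.one_le_rpow (le_max_left _ _) (one_div_nonneg.2 hp)

variable [MeasurableSpace Ω] {μ : Measure Ω}

lemma luxNorm_le_of_integral_le_one {f : Ω → ℝ} {t : ℝ} (ht : 0 < t)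
    (h : ∫ y, Φ (|f y| / t) ∂μ ≤ 1) : luxNorm μ Φ f ≤ t :=
  csInf_le ⟨0, fun _ hs => hs.1.le⟩ ⟨ht, h⟩

lemma luxNorm_le_mul_wDiscLuxNorm (h : HasPowerGrowth Φ p q) (hΨ : IsPhiPrefun Ψ) (hB : 0 ≤ B)
    (hΦΨ : ∀ t, 0 ≤ t → Φ t ≤ B * Ψ t) (hw : ∀ j, 0 ≤ w j) (hC : 1 ≤ C) (hBC : B < C * c)
    {X : Submodule ℝ (Ω → ℝ)}
    (hX : ∀ f ∈ X, 1 ≤ ∫ y, Φ |f y| ∂μ → c ≤ modular Φ w (f ∘ x)) {f : Ω → ℝ} (hf : f ∈ X) :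
    luxNorm μ Φ f ≤ C * wDiscLuxNorm Ψ x w f := by
  have hC0 : 0 < C := zero_lt_one.trans_le hC
  rw [← div_le_iff₀' hC0]
  refine le_csInf (exists_sum_map_div_le_one hΨ w (f ∘ x)) ?_
  rintro t ⟨ht, hsum⟩
  rw [div_le_iff₀' hC0]
  refine luxNorm_le_of_integral_le_one (by positivity) ?_
  by_contra! hlt
  have habs (y) : |f y| / (C * t) = |((C * t)⁻¹ • f) y| := by
    rw [Pi.smul_apply, smul_eq_mul, abs_mul, abs_inv, abs_of_pos (mul_pos hC0 ht), inv_mul_eq_div]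
  simp only [habs] at hlt
  refine hBC.not_ge ?_
  rw [← le_div_iff₀' hC0, div_eq_inv_mul]
  calc c ≤ modular Φ w (((C * t)⁻¹ • f) ∘ x) := hX _ (X.smul_mem _ hf) hlt.le
    _ = ∑ j, w j * Φ (C⁻¹ * (|f (x j)| / t)) := by
        refine Finset.sum_congr rfl fun j _ => ?_
        rw [Function.comp_apply, ← habs, mul_comm C, ← div_div, div_eq_inv_mul]
    _ ≤ ∑ j, w j * (C⁻¹ * (B * Ψ (|f (x j)| / t))) := by
        refine Finset.sum_le_sum fun j _ => mul_le_mul_of_nonneg_left ?_ (hw j)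
        have ht0 : 0 ≤ |f (x j)| / t := by positivity
        refine (h.map_mul_le (by positivity) (inv_le_one_of_one_le₀ hC) ht0).trans ?_
        exact mul_le_mul_of_nonneg_left (hΦΨ _ ht0) (by positivity)
    _ = C⁻¹ * B * ∑ j, w j * Ψ (|f (x j)| / t) := by
        rw [Finset.mul_sum]
        exact Finset.sum_congr rfl fun j _ => by ring
    _ ≤ C⁻¹ * B := mul_le_of_le_one_right (by positivity) hsum

end Luxemburg

end OrliczSampling

universe u

open OrliczSampling Module in
theorem statement13_general {p : ℝ} (hp : 1 ≤ p) {Φ Ψ : ℝ → ℝ} (hΦ : IsPhiPrefun Φ)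
    (hincΦ : IncP Φ p) (hdecΦ : ∃ q, DecQ Φ q) (hΨ : IsPhiPrefun Ψ) (hincΨ : ∃ a, AIncP Ψ p a)
    (hdecΨ : ∃ q, DecQ Ψ q) {K : ℝ}
    (hK : ∀ t s : ℝ, 0 < t → 0 < s → Φ (t * s) / Φ t ≤ K * Ψ s) :
    ∃ C c : ℝ, 0 < C ∧ 0 < c ∧ ∀ (Ω : Type u) [MeasurableSpace Ω] (μ : Measure Ω)
      [IsProbabilityMeasure μ] (X : Submodule ℝ (Ω → ℝ)), (∀ f ∈ X, Measurable f) →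
      (∀ f ∈ X, ∃ M : ℝ, ∀ y, |f y| ≤ M) → 0 < finrank ℝ X →
      ∃ (m : ℕ) (x : Fin m → Ω) (w : Fin m → ℝ),
        m ≤ c * Ψ ((finrank ℝ X : ℝ) ^ (1 / min p 2)) * Real.logb 2 (2 * finrank ℝ X) ^ 2 ∧
        (∀ j, 0 < w j) ∧ ∑ j, w j = 1 ∧
        ∀ f ∈ X, luxNorm μ Φ f ≤ C * wDiscLuxNorm Ψ x w f := by
  obtain ⟨q₁, hq₁⟩ := hdecΦ
  obtain ⟨q₂, hq₂⟩ := hdecΨ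
  obtain ⟨a, ha⟩ := hincΨ
  set q := max 2 (max q₁ q₂)
  have hgΦ : HasPowerGrowth Φ p q := hasPowerGrowth_of_incP_of_decQ hp (le_max_left _ _) hΦ hincΦ
    hq₁ ((le_max_left _ _).trans (le_max_right _ _))
  have hgΨ : HasAlmostPowerGrowth Ψ p q (max a 1) := hasAlmostPowerGrowth_of_aIncP_of_decQ hΨ ha
    hq₂ ((le_max_right _ _).trans (le_max_right _ _))
  have hΦ1 := hgΦ.pos one_pos
  have hΨ1 := hgΨ.pos one_pos
  have hK0 : 0 < K := by
    have hone := hK 1 1 one_pos one_pos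
    rw [mul_one, div_self hΦ1.ne'] at hone
    exact pos_of_mul_pos_left (zero_lt_one.trans_le hone) hΨ1.le
  have hΦΨ {t s : ℝ} (ht : 0 < t) (hs : 0 < s) : Φ (t * s) ≤ K * (Φ t * Ψ s) := by
    have hle := hK t s ht hs
    rwa [div_le_iff₀' (hgΦ.pos ht), mul_left_comm] at hle
  have hΦle (t : ℝ) (ht : 0 ≤ t) : Φ t ≤ K * Φ 1 * Ψ t := by
    rcases ht.eq_or_lt with rfl | ht
    · simp [hΦ.map_zero, hΨ.map_zero]
    · simpa [mul_assoc] using hΦΨ one_pos ht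
  have hloss : 0 < totalLoss q := totalLoss_pos q
  have hcount := sampleCountConst_pos hgΨ (zero_le_two.trans hgΦ.two_le) hK0
  refine ⟨K * Φ 1 / totalLoss q + 1, sampleCountConst Ψ q (max a 1) K, by positivity, hcount,
    fun Ω _ μ _ X hX hXb hN => ?_⟩
  obtain ⟨m, x, w, hm, hw, hw_sum, hdom⟩ :=
    exists_sample_of_submodule hgΦ hgΨ hK0 hΦΨ μ X hX hXb hN
  exact ⟨m, x, w, hm, hw, hw_sum, fun f hf => luxNorm_le_mul_wDiscLuxNorm hgΦ hΨ (by positivity)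
    hΦle (fun j => (hw j).le) (le_add_of_nonneg_left (by positivity))
    (by rw [add_mul, div_mul_cancel₀ _ hloss.ne']; linarith) hdom hf⟩

/-- Theorem t5.1. Let `p ∈ (1,∞)`, `Φ` a Φ-function with
`Φ ∈ (Inc)_p ∩ (Dec)`, `sup_{t>0} Φ(t)Φ(t⁻¹) < ∞` and continuous derivative `φ = Φ'` on
`(0,∞)`; let `Ψ ∈ (aInc)_p ∩ (Dec)` be a Φ-function with `Φ(ts)/Φ(t) ≤ K Ψ(s)`. Then there
are `C, c > 0` (depending only on `Φ, Ψ, p`) such that for every `N`-dimensional subspace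
`X_N ⊂ C(Ω)` containing the constants, there are `m ≤ c Ψ(N^{1/min{p,2}})(log₂ 2N)³` points
and positive weights summing to `1` with
`‖f‖_Φ ≤ C (M_{Φ,Ψ}(m))^{1/p} ‖f‖_{Ψ,x,λ}` for all `f ∈ X_N`. -/
theorem statement13 (p : ℝ) (hp : 1 < p)
    (Φ φ : ℝ → ℝ) (hpre : IsPhiPrefun Φ) (hphiw : ∃ a : ℝ, 1 ≤ a ∧ AIncP Φ 1 a)
    (hinc : IncP Φ p) (hdecΦ : ∃ q : ℝ, 1 ≤ q ∧ DecQ Φ q)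
    (hsupfin : ∃ M : ℝ, ∀ t : ℝ, 0 < t → Φ t * Φ t⁻¹ ≤ M)
    (hderiv : ∀ t : ℝ, 0 < t → HasDerivAt Φ (φ t) t)
    (hφcont : ContinuousOn φ (Set.Ioi 0))
    (Ψ : ℝ → ℝ) (hpreΨ : IsPhiPrefun Ψ) (hpsiw : ∃ a : ℝ, 1 ≤ a ∧ AIncP Ψ 1 a)
    (aΨ : ℝ) (haΨ : 1 ≤ aΨ) (hAΨ : AIncP Ψ p aΨ)
    (hdecΨ : ∃ q : ℝ, 1 ≤ q ∧ DecQ Ψ q)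
    (K : ℝ) (hK1 : 1 ≤ K)
    (hK : ∀ t s : ℝ, 0 < t → 0 < s → Φ (t * s) / Φ t ≤ K * Ψ s) :
    ∃ C c : ℝ, 0 < C ∧ 0 < c ∧
      ∀ (Ω : Type) [MetricSpace Ω] [CompactSpace Ω] [MeasurableSpace Ω] [BorelSpace Ω],
      ∀ (μ : Measure Ω), IsProbabilityMeasure μ →
      ∀ N : ℕ, 1 ≤ N →
      ∀ X : Submodule ℝ (Ω → ℝ),
        (∀ f ∈ X, Continuous f) →
        Module.finrank ℝ X = N →
        (fun _ : Ω => (1 : ℝ)) ∈ X →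
        ∃ (m : ℕ) (x : Fin m → Ω) (lam : Fin m → ℝ),
          (m : ℝ) ≤ c * Ψ ((N : ℝ) ^ (1 / min p 2)) * (Real.logb 2 (2 * N)) ^ 3 ∧
          (∀ j, 0 < lam j) ∧ (∑ j, lam j) = 1 ∧
          ∀ f ∈ X, luxNorm μ Φ f ≤ C * (MOf Φ Ψ m) ^ (1 / p) * wDiscLuxNorm Ψ x lam f := by
  obtain ⟨C, c, hC, hc, h⟩ := statement13_general hp.le hpre hinc (hdecΦ.imp fun _ => And.right)
    hpreΨ ⟨aΨ, hAΨ⟩ (hdecΨ.imp fun _ => And.right) hK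
  refine ⟨C, c, hC, hc, fun Ω _ _ _ _ μ _ N hN X hX hdim _ => ?_⟩
  have hbounded : ∀ f ∈ X, ∃ M : ℝ, ∀ y, |f y| ≤ M := fun f hf =>
    (isCompact_univ.exists_bound_of_continuousOn (hX f hf).continuousOn).imp fun _ hM y =>
      hM y (Set.mem_univ y)
  obtain ⟨m, x, w, hm, hw, hw_sum, hnorm⟩ :=
    h Ω μ X (fun f hf => (hX f hf).measurable) hbounded (hdim ▸ hN)
  subst hdim
  refine ⟨m, x, w, hm.trans ?_, hw, hw_sum, fun f hf => (hnorm f hf).trans ?_⟩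
  · have hΨ := hpreΨ.nonneg ((Module.finrank ℝ X : ℝ) ^ (1 / min p 2)) (by positivity)
    exact mul_le_mul_of_nonneg_left
      (pow_le_pow_right₀ (OrliczSampling.one_le_logFactor hN) (by norm_num)) (by positivity)
  · exact mul_le_mul_of_nonneg_right
      (le_mul_of_one_le_right hC.le (OrliczSampling.one_le_MOf_rpow (zero_le_one.trans hp.le) m))
      (OrliczSampling.wDiscLuxNorm_nonneg ..)
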